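/- With the expected-codimension hypothesis, the germ (X,0) = (F⁻¹(S_r),0) admits a smoothing (a deformation whose generic fibers avoid S_{r-1}, i.e. the perturbed fiber maps have empty preimage of S_{r-1}) if and only if q < (n-r+1)(n-r+2)/2. -/

import Mathlib

open Filter Topology

/-- `S` is a complex submanifold of `E` of codimension `c`: near each of its points it
is cut out by a holomorphic submersion to `ℂᶜ`. -/
def IsSubmanifoldOfCodim (E : Type*) [NormedAddCommGroup E] [NormedSpace ℂ E]
    (S : Set E) (c : ℕ) : Prop :=
  ∀ x ∈ S, ∃ U : Set E, IsOpen U ∧ x ∈ U ∧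
    ∃ g : E → EuclideanSpace ℂ (Fin c), ContDiffOn ℂ ⊤ g U ∧
      (∀ y ∈ U, y ∈ S ↔ g y = 0) ∧ Function.Surjective (fderiv ℂ g x)

/-!
The set `S` of symmetric matrices of rank at most `r - 1` is closed and stratified by rank, the top
stratum having the smallest codimension `c = (n - r + 1)(n - r + 2) / 2`. For maps from a space of
dimension `c` into the symmetric matrices, jets that meet `S` without being transverse to its top
stratum form a set of real codimension `2c + 2`. A generic real path of such maps therefore meets
`S` transversally at every time, so that hits neither appear nor cancel: their number in a compact
region is constant as long as there are none on the boundary.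

If `c ≤ q`, restrict `F` to a generic linear `J : ℂᶜ → ℂ^q`, chosen so that `F ∘ J` misses `S` on
the unit sphere. A small perturbation makes `F ∘ J` hit `S` transversally at the origin, and the
constancy of the count forces every nearby fiber of a deformation to meet `S`.

If `q < c`, use the deformation `F z + y (v + L (z, y))` with generic `(v, L)`. For `q + 1 < c` it
misses `S` off `y = 0` by a dimension count. For `q + 1 = c` it meets `S` off `y = 0` in transverse
hits only, and in a box around the origin these are at most as many as the hits of a generic
perturbation, so only finitely many parameters `y` are excluded.
-/

namespace Smoothing

open Module (finrank)

theorem surjective_fderiv_of_comp {𝕜 E F G : Type*} [NontriviallyNormedField 𝕜]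
    [NormedAddCommGroup E] [NormedSpace 𝕜 E] [NormedAddCommGroup F] [NormedSpace 𝕜 F]
    [NormedAddCommGroup G] [NormedSpace 𝕜 G] {f : F → G} {g : E → F} {x : E}
    (hf : DifferentiableAt 𝕜 f (g x)) (hg : DifferentiableAt 𝕜 g x)
    (h : Function.Surjective (fderiv 𝕜 (fun y => f (g y)) x)) :
    Function.Surjective (fderiv 𝕜 f (g x)) := by
  rw [fderiv_fun_comp x hf hg] at h
  exact Function.Surjective.of_comp h

section Codimension

variable {P Q R : Type*} [NormedAddCommGroup P] [NormedSpace ℝ P]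
  [NormedAddCommGroup Q] [NormedSpace ℝ Q] [NormedAddCommGroup R] [NormedSpace ℝ R]

/-- `S` has codimension at least `c` in the finite-dimensional real space `P`, in the sense that
countably many `C¹` images of `ℝᵈ` with `d + c ≤ dim P` cover it. The dimensions `d` may vary, and
the empty set has every codimension. -/
def HasC1Codim (c : ℕ) (S : Set P) : Prop :=
  ∃ 𝒞 : Set (Set P), 𝒞.Countable ∧ S ⊆ ⋃₀ 𝒞 ∧ ∀ T ∈ 𝒞, ∃ d : ℕ, d + c ≤ finrank ℝ P ∧
    ∃ f : (Fin d → ℝ) → P, ContDiff ℝ 1 f ∧ T = Set.range f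

namespace HasC1Codim

variable {c c' : ℕ} {S T : Set P}

theorem mono (h : HasC1Codim c T) (hST : S ⊆ T) : HasC1Codim c S := by
  obtain ⟨𝒞, hc, hT, h⟩ := h
  exact ⟨𝒞, hc, hST.trans hT, h⟩

theorem anti (h : HasC1Codim c S) (hc : c' ≤ c) : HasC1Codim c' S := by
  obtain ⟨𝒞, hcount, hS, h⟩ := h
  refine ⟨𝒞, hcount, hS, fun T hT => ?_⟩
  obtain ⟨d, hd, hf⟩ := h T hT
  exact ⟨d, by lia, hf⟩

theorem iUnion {ι : Sort*} [Countable ι] {S : ι → Set P} (h : ∀ i, HasC1Codim c (S i)) :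
    HasC1Codim c (⋃ i, S i) := by
  choose 𝒞 hcount hS h using h
  refine ⟨⋃ i, 𝒞 i, Set.countable_iUnion hcount,
    Set.iUnion_subset fun i => (hS i).trans (Set.sUnion_subset_sUnion (Set.subset_iUnion 𝒞 i)),
    fun T hT => ?_⟩
  obtain ⟨i, hi⟩ := Set.mem_iUnion.1 hT
  exact h i T hi

theorem union (hS : HasC1Codim c S) (hT : HasC1Codim c T) : HasC1Codim c (S ∪ T) := by
  rw [Set.union_eq_iUnion]
  exact iUnion fun b => by cases b <;> assumption

theorem range [FiniteDimensional ℝ Q] {f : Q → P} (hf : ContDiff ℝ 1 f)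
    (h : finrank ℝ Q + c ≤ finrank ℝ P) : HasC1Codim c (Set.range f) := by
  let e := ContinuousLinearEquiv.ofFinrankEq (𝕜 := ℝ) (E := Fin (finrank ℝ Q) → ℝ) (F := Q)
    (by simp)
  exact ⟨{Set.range f}, Set.countable_singleton _, by simp, fun T hT =>
    ⟨_, h, f ∘ e, hf.comp e.contDiff, by
      rw [Set.mem_singleton_iff.1 hT, e.surjective.range_comp]⟩⟩

theorem singleton (x : P) : HasC1Codim (finrank ℝ P) {x} := by
  rw [← Set.range_const (ι := Fin 0 → ℝ)]
  exact range contDiff_const (by simp)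

theorem zero [FiniteDimensional ℝ P] : HasC1Codim 0 S :=
  (range contDiff_id le_rfl).mono (by simp)

theorem of_forall_range {c' : ℕ} {r : P → R → Prop} (h : HasC1Codim c S)
    (H : ∀ (d : ℕ) (f : (Fin d → ℝ) → P), d + c ≤ finrank ℝ P → ContDiff ℝ 1 f →
      HasC1Codim c' {y | ∃ u, r (f u) y}) :
    HasC1Codim c' {y | ∃ x ∈ S, r x y} := by
  obtain ⟨𝒞, hcount, hS, h⟩ := h
  have := hcount.to_subtype
  refine (iUnion (S := fun T : 𝒞 => {y | ∃ x ∈ T.1, r x y}) fun T => ?_).mono ?_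
  · obtain ⟨d, hd, f, hf, hT⟩ := h T T.2
    simpa only [hT, Set.exists_range_iff] using H d f hd hf
  · rintro y ⟨x, hx, hxy⟩
    obtain ⟨T, hT, hxT⟩ := hS hx
    exact Set.mem_iUnion.2 ⟨⟨T, hT⟩, x, hxT, hxy⟩

theorem image [FiniteDimensional ℝ Q] (h : HasC1Codim c S) {f : P → Q}
    (hf : ContDiff ℝ 1 f) (hc : c' + finrank ℝ P ≤ c + finrank ℝ Q) :
    HasC1Codim c' (f '' S) :=
  h.of_forall_range fun d g hd hg => range (hf.comp hg) (by simp; lia)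

theorem prod_univ [FiniteDimensional ℝ P] [FiniteDimensional ℝ Q] (h : HasC1Codim c S) :
    HasC1Codim c (S ×ˢ (Set.univ : Set Q)) := by
  refine (h.of_forall_range (r := fun x y => y.1 = x) fun d g hd hg => ?_).mono
    fun y hy => ⟨y.1, hy.1, rfl⟩
  refine (range (f := Prod.map g (id : Q → Q)) (hg.prodMap contDiff_id) (by simp; lia)).mono ?_
  rintro ⟨_, y⟩ ⟨u, rfl⟩
  exact ⟨(u, y), rfl⟩

theorem dense_compl [FiniteDimensional ℝ P] (h : HasC1Codim c S) (hc : 0 < c) : Dense Sᶜ := by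
  obtain ⟨𝒞, hcount, hS, h⟩ := h
  rcases 𝒞.eq_empty_or_nonempty with rfl | ⟨T₀, hT₀⟩
  · have hS0 : S = ∅ := by simpa using hS
    simp [hS0]
  obtain ⟨d₀, hd₀, -⟩ := h T₀ hT₀
  refine dense_compl_of_dimH_lt_finrank ((dimH_mono hS).trans_lt ?_)
  rw [dimH_sUnion hcount]
  refine lt_of_le_of_lt (b := ((finrank ℝ P - c : ℕ) : ENNReal)) (iSup₂_le fun T hT => ?_)
    (by exact_mod_cast (by lia : finrank ℝ P - c < finrank ℝ P))
  obtain ⟨d, hd, f, hf, rfl⟩ := h T hT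
  refine hf.dimH_range_le.trans ?_
  rw [Module.finrank_fin_fun]
  exact_mod_cast (by lia : d ≤ finrank ℝ P - c)

theorem of_local [FiniteDimensional ℝ P] (h : ∀ x ∈ S, ∃ U ∈ 𝓝[S] x, HasC1Codim c U) :
    HasC1Codim c S := by
  choose! U hU hc using h
  obtain ⟨t, htS, htc, hcov⟩ := TopologicalSpace.countable_cover_nhdsWithin hU
  have := htc.to_subtype
  rw [Set.biUnion_eq_iUnion] at hcov
  exact (iUnion fun x : t => hc x (htS x.2)).mono hcov

theorem exists_image_mem_nhds [FiniteDimensional ℝ Q] {f : Q → P} {x : Q}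
    (hf : ContDiffAt ℝ 1 f x) (hc : finrank ℝ Q + c ≤ finrank ℝ P) :
    ∃ U ∈ 𝓝 x, HasC1Codim c (f '' U) := by
  obtain ⟨ε, hε, hb⟩ := Metric.eventually_nhds_iff_ball.1 (hf.eventually (by simp))
  let χ : ContDiffBump x := ⟨ε / 4, ε / 2, by positivity, by linarith⟩
  have hsupp : tsupport χ ⊆ Metric.ball x ε := by
    rw [χ.tsupport_eq]
    exact Metric.closedBall_subset_ball (half_lt_self hε)
  have hχf : ContDiff ℝ 1 fun y => χ y • f y := by
    refine contDiff_iff_contDiffAt.2 fun y => ?_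
    by_cases hy : y ∈ tsupport χ
    · exact χ.contDiffAt.smul (hb y (hsupp hy))
    · refine (contDiffAt_const (c := 0)).congr_of_eventuallyEq ?_
      filter_upwards [notMem_tsupport_iff_eventuallyEq.1 hy] with z hz
      simp [hz]
  refine ⟨Metric.closedBall x (ε / 4), Metric.closedBall_mem_nhds x (by positivity),
    (range hχf hc).mono ?_⟩
  rintro _ ⟨y, hy, rfl⟩
  exact ⟨y, by simp only [χ.one_of_mem_closedBall hy, one_smul]⟩

theorem of_submersion [FiniteDimensional ℝ P] [FiniteDimensional ℝ Q]
    (h : ∀ x ∈ S, ∃ f : P → Q, ContDiffAt ℝ 1 f x ∧ Function.Surjective (fderiv ℝ f x) ∧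
      ∀ᶠ y in 𝓝[S] x, f y = 0) :
    HasC1Codim (finrank ℝ Q) S := by
  refine of_local fun x hx => ?_
  obtain ⟨f, hf, hsurj, hS⟩ := h x hx
  have := FiniteDimensional.complete ℝ P
  have := FiniteDimensional.complete ℝ Q
  let φ := (hf.hasStrictFDerivAt one_ne_zero).implicitFunctionDataOfComplemented f (fderiv ℝ f x)
    (LinearMap.range_eq_top.2 hsurj) (Submodule.ClosedComplemented.of_finiteDimensional _)
  have hright : ContDiff ℝ 1 φ.rightFun :=
    (ContinuousLinearMap.contDiff _).comp (contDiff_id.sub contDiff_const)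
  have hψ : ContDiffAt ℝ 1 (φ.implicitFunction 0) (φ.rightFun x) := by
    have h0 : f x = 0 := hS.self_of_nhdsWithin hx
    have hφ : ContDiffAt ℝ 1 φ.implicitFunction.uncurry (f x, φ.rightFun x) :=
      φ.contDiffAt_implicitFunction hf hright.contDiffAt one_ne_zero
    rw [h0] at hφ
    exact hφ.comp (φ.rightFun x) (contDiff_prodMk_right (0 : Q)).contDiffAt
  have hdim : finrank ℝ (fderiv ℝ f x).ker + finrank ℝ Q ≤ finrank ℝ P := by
    rw [← (fderiv ℝ f x).toLinearMap.finrank_range_add_finrank_ker, LinearMap.range_eq_top.2 hsurj,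
      finrank_top, add_comm]
  obtain ⟨U, hU, hcodim⟩ := exists_image_mem_nhds hψ hdim
  refine ⟨_, ?_, hcodim⟩
  have hU' : ∀ᶠ y in 𝓝 x, φ.rightFun y ∈ U := hright.continuous.continuousAt hU
  filter_upwards [hS, nhdsWithin_le_nhds hU', nhdsWithin_le_nhds φ.implicitFunction_apply_image]
    with y hy hyU hyφ
  have : φ.implicitFunction (f y) (φ.rightFun y) = y := hyφ
  exact ⟨_, hyU, by rwa [hy] at this⟩

theorem inter_preimage [FiniteDimensional ℝ P] [FiniteDimensional ℝ Q] {X : Set Q}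
    (h : HasC1Codim c X) {f : P → Q} (hf : ContDiff ℝ 1 f)
    (hsurj : ∀ x ∈ S, Function.Surjective (fderiv ℝ f x)) : HasC1Codim c (S ∩ f ⁻¹' X) := by
  refine (h.of_forall_range (r := fun x y => y ∈ S ∧ f y = x) fun d g hd hg => ?_).mono
    fun y hy => ⟨f y, hy.2, hy.1, rfl⟩
  have hgraph : HasC1Codim (finrank ℝ Q) {p : P × (Fin d → ℝ) | p.1 ∈ S ∧ f p.1 = g p.2} := by
    have hdiff : ContDiff ℝ 1 fun p : P × (Fin d → ℝ) => f p.1 - g p.2 :=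
      (hf.comp contDiff_fst).sub (hg.comp contDiff_snd)
    refine of_submersion fun p hp => ⟨_, hdiff.contDiffAt, ?_,
      eventually_nhdsWithin_of_forall fun y hy => sub_eq_zero.2 hy.2⟩
    refine surjective_fderiv_of_comp (g := fun x => (x, p.2)) (x := p.1)
      (hdiff.differentiable one_ne_zero p) (by fun_prop) ?_
    simpa only [fderiv_sub_const] using hsurj p.1 hp.1
  refine (hgraph.image (c' := c) contDiff_fst (by simp; lia)).mono ?_
  rintro y ⟨u, hy, hyu⟩
  exact ⟨(y, u), ⟨hy, hyu⟩, rfl⟩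

/-- Thom's parametric transversality theorem: if `Φ (·, t)` is a submersion for every `t ∈ M`, then
the parameters `θ` for which `Φ (θ, ·)` maps a point of `M` into `X` form a set of codimension
`codim M + codim X - dim T`. -/
theorem exists_mem_of_submersion {T W : Type*} [NormedAddCommGroup T] [NormedSpace ℝ T]
    [NormedAddCommGroup W] [NormedSpace ℝ W] [FiniteDimensional ℝ P]
    [FiniteDimensional ℝ W] {M : Set T} {X : Set W} {a d : ℕ} (hM : HasC1Codim a M)
    (hX : HasC1Codim d X) {Φ : P × T → W} (hΦ : ContDiff ℝ 1 Φ)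
    (hsurj : ∀ θ, ∀ t ∈ M, Function.Surjective (fderiv ℝ (fun θ => Φ (θ, t)) θ))
    (hc : c + finrank ℝ T ≤ a + d) : HasC1Codim c {θ | ∃ t ∈ M, Φ (θ, t) ∈ X} := by
  refine (hM.of_forall_range (r := fun t θ => t ∈ M ∧ Φ (θ, t) ∈ X) fun e g he hg => ?_).mono
    fun θ ⟨t, ht, h⟩ => ⟨t, ht, ht, h⟩
  have hΨ : ContDiff ℝ 1 fun p : P × (Fin e → ℝ) => Φ (p.1, g p.2) :=
    hΦ.comp (contDiff_fst.prodMk (hg.comp contDiff_snd))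
  have hpre : HasC1Codim d ({p : P × (Fin e → ℝ) | g p.2 ∈ M} ∩
      (fun p : P × (Fin e → ℝ) => Φ (p.1, g p.2)) ⁻¹' X) :=
    hX.inter_preimage hΨ fun p hp => surjective_fderiv_of_comp (g := fun θ => (θ, p.2))
      (x := p.1) (hΨ.differentiable one_ne_zero p) (by fun_prop) (hsurj p.1 _ hp)
  refine (hpre.image (c' := c) contDiff_fst (by simp; lia)).mono ?_
  rintro θ ⟨u, hu⟩
  exact ⟨(θ, u), hu, rfl⟩

end HasC1Codim

theorem _root_.IsSubmanifoldOfCodim.hasC1Codim {E : Type*} [NormedAddCommGroup E] [NormedSpace ℂ E]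
    [FiniteDimensional ℂ E] {S : Set E} {c : ℕ} (h : IsSubmanifoldOfCodim E S c) :
    HasC1Codim (2 * c) S := by
  have := FiniteDimensional.complexToReal E
  have hdim : finrank ℝ (EuclideanSpace ℂ (Fin c)) = 2 * c := by
    rw [finrank_real_of_complex, finrank_euclideanSpace_fin]
  refine hdim ▸ HasC1Codim.of_submersion fun x hx => ?_
  obtain ⟨U, hU, hxU, g, hg, hgS, hsurj⟩ := h x hx
  have hgx : ContDiffAt ℂ 1 g x := (hg.contDiffAt (hU.mem_nhds hxU)).of_le le_top
  refine ⟨g, hgx.restrict_scalars ℝ, ?_, ?_⟩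
  · rw [((hgx.differentiableAt one_ne_zero).hasFDerivAt.restrictScalars ℝ).fderiv]
    exact hsurj
  · filter_upwards [self_mem_nhdsWithin, nhdsWithin_le_nhds (hU.mem_nhds hxU)] with y hy hyU
    exact (hgS y hyU).1 hy

theorem _root_.IsSubmanifoldOfCodim.eq_empty {E : Type*} [NormedAddCommGroup E] [NormedSpace ℂ E]
    [FiniteDimensional ℂ E] {S : Set E} {c : ℕ} (h : IsSubmanifoldOfCodim E S c)
    (hc : finrank ℂ E < c) : S = ∅ := by
  refine Set.eq_empty_of_forall_notMem fun x hx => hc.not_ge ?_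
  obtain ⟨U, -, -, g, -, -, hsurj⟩ := h x hx
  simpa using LinearMap.finrank_le_finrank_of_surjective (f := (fderiv ℂ g x).toLinearMap) hsurj

end Codimension

section Transversality

variable {E V : Type*} [NormedAddCommGroup E] [NormedSpace ℂ E]
  [NormedAddCommGroup V] [NormedSpace ℂ V]

/-- Pairs `(v, L)`, read either as 1-jets of maps `E → V` at a point, with value `v` and
derivative `L`, or as the affine maps `p ↦ v + L p`, which serve as perturbations. -/
abbrev Jet (E V : Type*) [NormedAddCommGroup E] [NormedSpace ℂ E]
    [NormedAddCommGroup V] [NormedSpace ℂ V] : Type _ :=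
  V × (E →L[ℂ] V)

/-- The affine map with value `θ.1` at the origin and linear part `θ.2`. -/
def Jet.eval (θ : Jet E V) (p : E) : V :=
  θ.1 + θ.2 p

/-- The 1-jet `(v, L)` is transverse to `S`, where the codimension of `S` is the dimension of the
source `E`: near `v`, the set `S` is cut out by `C¹` equations `g = 0`, and `Dg(v) ∘ L` is
invertible. -/
def IsTransverseJet (S : Set V) (j : Jet E V) : Prop :=
  j.1 ∈ S ∧ ∃ g : V → EuclideanSpace ℂ (Fin (finrank ℂ E)), ContDiffAt ℂ 1 g j.1 ∧
    (∀ᶠ w in 𝓝 j.1, w ∈ S ↔ g w = 0) ∧ (fderiv ℂ g j.1 ∘L j.2).IsInvertible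

/-- The map `G` hits `S` transversally at `p`. -/
def IsTransverseHit (S : Set V) (G : E → V) (p : E) : Prop :=
  IsTransverseJet S (G p, fderiv ℂ G p)

/-- The 1-jets with value in `S` that are not transverse to `S`. -/
def nonTransverseJets (E : Type*) [NormedAddCommGroup E] [NormedSpace ℂ E] (S : Set V) :
    Set (Jet E V) :=
  {j | j.1 ∈ S ∧ ¬ IsTransverseJet S j}

variable {Λ : Type*} [NormedAddCommGroup Λ] [NormedSpace ℂ Λ] {S : Set V} {G : Λ × E → V}
  {Ω K : Set E} {l : Λ}

theorem fderiv_comp_inr {𝕜 E F G : Type*} [NontriviallyNormedField 𝕜]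
    [NormedAddCommGroup E] [NormedSpace 𝕜 E] [NormedAddCommGroup F] [NormedSpace 𝕜 F]
    [NormedAddCommGroup G] [NormedSpace 𝕜 G] {f : E × F → G} {u : E × F}
    (hf : DifferentiableAt 𝕜 f u) :
    fderiv 𝕜 f u ∘L .inr 𝕜 E F = fderiv 𝕜 (fun y => f (u.1, y)) u.2 :=
  ((hf.hasFDerivAt.comp u.2 (hasFDerivAt_prodMk_right u.1 u.2)).fderiv).symm

theorem IsTransverseHit.exists_implicitFunction [CompleteSpace Λ] [CompleteSpace E] {p : E}
    (hG : ContDiffAt ℂ 1 G (l, p)) (h : IsTransverseHit S (fun p => G (l, p)) p) :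
    ∃ φ : Λ → E, Tendsto φ (𝓝 l) (𝓝 p) ∧ ∀ᶠ u in 𝓝 (l, p), G u ∈ S ↔ φ u.1 = u.2 := by
  obtain ⟨hp, g, hg, hgS, hinv⟩ := h
  have hgG : ContDiffAt ℂ 1 (fun u => g (G u)) (l, p) := ContDiffAt.comp (l, p) hg hG
  have hpartial : (fderiv ℂ (fun u => g (G u)) (l, p) ∘L .inr ℂ Λ E).IsInvertible := by
    rw [fderiv_fun_comp (l, p) (hg.differentiableAt one_ne_zero) (hG.differentiableAt one_ne_zero),
      ContinuousLinearMap.comp_assoc, fderiv_comp_inr (hG.differentiableAt one_ne_zero)]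
    exact hinv
  have hφ := hgG.contDiffAt_implicitFunction one_ne_zero hpartial
  refine ⟨hgG.implicitFunction one_ne_zero hpartial, ?_, ?_⟩
  · simpa only [hgG.implicitFunction_apply_self one_ne_zero hpartial] using hφ.continuousAt.tendsto
  · filter_upwards [hG.continuousAt.eventually hgS,
      hgG.eventually_apply_eq_iff_implicitFunction one_ne_zero hpartial] with u huS hu
    rw [huS, ← hu, hgS.self_of_nhds.1 hp]

theorem encard_le_encard_hits [CompleteSpace Λ] [CompleteSpace E] {A : Set E} (hA : A.Finite)
    (hG : ContDiff ℂ 1 G) (hΩ : IsOpen Ω)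
    (h : ∀ p ∈ A, p ∈ Ω ∧ IsTransverseHit S (fun p => G (l, p)) p) :
    ∀ᶠ l' in 𝓝 l, A.encard ≤ {p ∈ Ω | G (l', p) ∈ S}.encard := by
  choose! φ hφ hφS using fun p hp => (h p hp).2.exists_implicitFunction hG.contDiffAt
  obtain ⟨U, hU, hdisj⟩ := hA.t2_separation
  have hmem : ∀ᶠ l' in 𝓝 l, ∀ p ∈ A, φ p l' ∈ U p ∧ φ p l' ∈ Ω ∧ G (l', φ p l') ∈ S := by
    refine hA.eventually_all.2 fun p hp => ?_
    have hpair : Tendsto (fun l' => (l', φ p l')) (𝓝 l) (𝓝 (l, p)) :=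
      tendsto_id.prodMk_nhds (hφ p hp)
    filter_upwards [hφ p hp ((hU p).2.mem_nhds (hU p).1), hφ p hp (hΩ.mem_nhds (h p hp).1),
      hpair.eventually (hφS p hp)] with l' h1 h2 h3
    exact ⟨h1, h2, h3.2 rfl⟩
  filter_upwards [hmem] with l' hl'
  refine Set.encard_le_encard_of_injOn (f := fun p => φ p l') (fun p hp => (hl' p hp).2) ?_
  intro p hp p' hp' heq
  by_contra hne
  have hmem' : φ p l' ∈ U p' := by simpa only [heq] using (hl' p' hp').1
  exact Set.disjoint_left.1 (hdisj hp hp' hne) (hl' p hp).1 hmem'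

theorem isDiscrete_of_isTransverseHit [CompleteSpace E] {G : E → V} {A : Set E}
    (hG : ContDiff ℂ 1 G) (h : ∀ p ∈ A, IsTransverseHit S G p) :
    IsDiscrete A := by
  refine isDiscrete_iff_nhdsNE.2 fun p hp => ?_
  obtain ⟨φ, -, hφ⟩ := IsTransverseHit.exists_implicitFunction (Λ := ℂ) (l := 0)
    (G := fun u => G u.2) (by fun_prop) (h p hp)
  have hφ' : ∀ᶠ p' in 𝓝 p, G p' ∈ S ↔ φ 0 = p' :=
    (Continuous.prodMk_right (0 : ℂ)).continuousAt.eventually hφ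
  have hφp : φ 0 = p := hφ'.self_of_nhds.1 (h p hp).1
  refine inf_principal_eq_bot.2 ?_
  filter_upwards [self_mem_nhdsWithin, nhdsWithin_le_nhds hφ'] with p' hne hp' hp'A
  exact hne ((hp'.1 (h p' hp'A).1).symm.trans hφp)

theorem finite_hits [CompleteSpace E] {G : E → V} (hS : IsClosed S) (hG : ContDiff ℂ 1 G)
    (hK : IsCompact K) (h : ∀ p ∈ K, G p ∈ S → IsTransverseHit S G p) :
    {p ∈ K | G p ∈ S}.Finite :=
  (hK.inter_right (hS.preimage hG.continuous)).finite
    (isDiscrete_of_isTransverseHit hG fun p hp => h p hp.1 hp.2)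

theorem eventually_encard_hits_eq [CompleteSpace Λ] [CompleteSpace E] (hS : IsClosed S)
    (hG : ContDiff ℂ 1 G) (hΩ : IsOpen Ω) (hK : IsCompact K) (hΩK : Ω ⊆ K)
    (h : ∀ p ∈ K, G (l, p) ∈ S → p ∈ Ω ∧ IsTransverseHit S (fun p => G (l, p)) p) :
    ∀ᶠ l' in 𝓝 l, {p ∈ Ω | G (l', p) ∈ S}.encard = {p ∈ Ω | G (l, p) ∈ S}.encard := by
  set A := {p ∈ Ω | G (l, p) ∈ S}
  have hA : A.Finite := (finite_hits hS (hG.comp (contDiff_prodMk_right l)) hK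
    fun p hp hpS => (h p hp hpS).2).subset fun p hp => ⟨hΩK hp.1, hp.2⟩
  choose! φ _ hφS using fun p (hp : p ∈ A) =>
    (h p (hΩK hp.1) hp.2).2.exists_implicitFunction hG.contDiffAt
  have hcov : ∀ᶠ l' in 𝓝 l, ∀ p ∈ K, G (l', p) ∈ S → ∃ a ∈ A, φ a l' = p := by
    refine hK.eventually_forall_of_forall_eventually fun p hp => ?_
    by_cases hpS : G (l, p) ∈ S
    · have hpA : p ∈ A := ⟨(h p hp hpS).1, hpS⟩
      filter_upwards [hφS p hpA] with u hu huS
      exact ⟨p, hpA, hu.1 huS⟩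
    · filter_upwards [hG.continuous.continuousAt (hS.isOpen_compl.mem_nhds hpS)] with u hu huS
      exact absurd huS hu
  filter_upwards [hcov, encard_le_encard_hits hA hG hΩ
    fun p hp => ⟨hp.1, (h p (hΩK hp.1) hp.2).2⟩] with l' hl' hge
  refine le_antisymm ?_ hge
  calc {p ∈ Ω | G (l', p) ∈ S}.encard ≤ ((fun a => φ a l') '' A).encard :=
        Set.encard_le_encard fun p hp => hl' p (hΩK hp.1) hp.2
    _ ≤ A.encard := Set.encard_image_le _ _

theorem encard_hits_eq_of_path [CompleteSpace E] {H : ℂ × E → V} (hS : IsClosed S)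
    (hH : ContDiff ℂ 1 H) (hΩ : IsOpen Ω) (hK : IsCompact K) (hΩK : Ω ⊆ K)
    (h : ∀ s : unitInterval, ∀ p ∈ K, H (s, p) ∈ S →
      p ∈ Ω ∧ IsTransverseHit S (fun p => H (s, p)) p) :
    {p ∈ Ω | H (0, p) ∈ S}.encard = {p ∈ Ω | H (1, p) ∈ S}.encard := by
  have hloc : IsLocallyConstant fun s : unitInterval => {p ∈ Ω | H (s, p) ∈ S}.encard :=
    (IsLocallyConstant.iff_eventually_eq _).2 fun s => by
      have hcont : Continuous fun s : unitInterval => ((s : ℝ) : ℂ) := by fun_prop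
      exact hcont.continuousAt.eventually (eventually_encard_hits_eq hS hH hΩ hK hΩK (h s))
  simpa using hloc.apply_eq_of_preconnectedSpace 0 1

end Transversality

section DegenerateJets

variable {E V Q : Type*} [NormedAddCommGroup E] [NormedSpace ℂ E]
  [NormedAddCommGroup V] [NormedSpace ℂ V] [NormedAddCommGroup Q] [NormedSpace ℂ Q]

theorem eventually_surjective_fderiv [FiniteDimensional ℂ Q] {g : V → Q} {v : V}
    (hg : ContDiffAt ℂ 1 g v) (hsurj : Function.Surjective (fderiv ℂ g v)) :
    ∀ᶠ w in 𝓝 v, Function.Surjective (fderiv ℂ g w) := by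
  have := FiniteDimensional.complete ℂ Q
  obtain ⟨R, hR⟩ := (fderiv ℂ g v).exists_rightInverse_of_surjective
    (LinearMap.range_eq_top.2 hsurj)
  have hcont : ContinuousAt (fun w => fderiv ℂ g w ∘L R) v :=
    (hg.continuousAt_fderiv one_ne_zero).clm_comp continuousAt_const
  have hmem : Set.range ((↑) : (Q ≃L[ℂ] Q) → Q →L[ℂ] Q) ∈ 𝓝 (fderiv ℂ g v ∘L R) :=
    ContinuousLinearEquiv.isOpen.mem_nhds ⟨.refl ℂ Q, hR.symm⟩
  filter_upwards [hcont hmem] with w ⟨e, he⟩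
  refine Function.Surjective.of_comp (g := R) ?_
  have he : (e : Q →L[ℂ] Q) = fderiv ℂ g w ∘L R := he
  rw [← ContinuousLinearMap.coe_comp, ← he]
  exact e.surjective

theorem contDiffAt_incidence {g : V → Q} {v : V} {L : E →L[ℂ] V} {e : E} (φ : E →L[ℂ] ℂ)
    (hg : ContDiffAt ℂ 2 g v) :
    ContDiffAt ℂ 1 (fun p : Jet E V × E =>
      (g p.1.1, fderiv ℂ g p.1.1 (p.1.2 p.2), φ p.2 - 1)) ((v, L), e) := by
  have hdg : ContDiffAt ℂ 1 (fderiv ℂ g) v := hg.fderiv_right (m := 1) le_rfl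
  have h11 : ContDiffAt ℂ 1 (fun p : Jet E V × E => p.1.1) ((v, L), e) := by fun_prop
  have h12 : ContDiffAt ℂ 1 (fun p : Jet E V × E => p.1.2 p.2) ((v, L), e) :=
    contDiffAt_fst.snd.clm_apply contDiffAt_snd
  exact ((hg.of_le one_le_two).comp ((v, L), e) h11).prodMk
    (((hdg.comp ((v, L), e) h11).clm_apply h12).prodMk
      ((φ.contDiff.contDiffAt.comp _ contDiffAt_snd).sub contDiffAt_const))

theorem surjective_fderiv_incidence {g : V → Q} {v : V} {L : E →L[ℂ] V} {e : E} (φ : E →L[ℂ] ℂ)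
    (hg : ContDiffAt ℂ 2 g v) (hsurj : Function.Surjective (fderiv ℂ g v))
    (hL : fderiv ℂ g v (L e) = 0) (he : φ e = 1) :
    Function.Surjective (fderiv ℂ (fun p : Jet E V × E =>
      (g p.1.1, fderiv ℂ g p.1.1 (p.1.2 p.2), φ p.2 - 1)) ((v, L), e)) := by
  rintro ⟨a, b, t⟩
  have hg1 : HasFDerivAt g (fderiv ℂ g v) v := (hg.differentiableAt two_ne_zero).hasFDerivAt
  have hg2 : HasFDerivAt (fderiv ℂ g) (fderiv ℂ (fderiv ℂ g) v) v :=
    ((hg.fderiv_right (m := 1) le_rfl).differentiableAt one_ne_zero).hasFDerivAt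
  have h11 : HasFDerivAt (𝕜 := ℂ) (fun p : Jet E V × E => p.1.1) _ ((v, L), e) :=
    (ContinuousLinearMap.fst ℂ V (E →L[ℂ] V) ∘L .fst ℂ (Jet E V) E).hasFDerivAt
  have h12 : HasFDerivAt (𝕜 := ℂ) (fun p : Jet E V × E => p.1.2) _ ((v, L), e) :=
    (ContinuousLinearMap.snd ℂ V (E →L[ℂ] V) ∘L .fst ℂ (Jet E V) E).hasFDerivAt
  have h2 : HasFDerivAt (𝕜 := ℂ) (fun p : Jet E V × E => p.2) _ ((v, L), e) := hasFDerivAt_snd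
  have hderiv := (hg1.comp ((v, L), e) h11).prodMk
    (((hg2.comp ((v, L), e) h11).clm_apply (h12.clm_apply h2)).prodMk
      ((φ.hasFDerivAt.comp ((v, L), e) h2).sub_const 1))
  obtain ⟨w, hw⟩ := hsurj a
  obtain ⟨u, hu⟩ := hsurj (b - fderiv ℂ (fderiv ℂ g) v w (L e))
  refine ⟨((w, φ.smulRight u), t • e), ?_⟩
  have hderiv' := hderiv.fderiv
  simp only [Function.comp_def] at hderiv'
  rw [hderiv']
  simp [hw, hu, hL, he]

theorem hasC1Codim_degenerate_jets [FiniteDimensional ℂ E] [FiniteDimensional ℂ V]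
    [FiniteDimensional ℂ Q] {U : Set V} {g : V → Q} (hU : IsOpen U)
    (hg : ContDiffOn ℂ 2 g U) (hsurj : ∀ v ∈ U, Function.Surjective (fderiv ℂ g v))
    (hdim : finrank ℂ E = finrank ℂ Q) :
    HasC1Codim (2 * finrank ℂ E + 2)
      {j : Jet E V | j.1 ∈ U ∧ g j.1 = 0 ∧ ¬ Function.Injective (fderiv ℂ g j.1 ∘L j.2)} := by
  have := FiniteDimensional.complexToReal E
  have := FiniteDimensional.complexToReal V
  have := FiniteDimensional.complexToReal Q
  have := FiniteDimensional.complexToReal (E →L[ℂ] V)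
  let φ (k : Fin (finrank ℂ E)) : E →L[ℂ] ℂ :=
    LinearMap.toContinuousLinearMap ((Module.finBasis ℂ E).coord k)
  let B (k : Fin (finrank ℂ E)) : Set (Jet E V × E) :=
    {p | p.1.1 ∈ U ∧ g p.1.1 = 0 ∧ fderiv ℂ g p.1.1 (p.1.2 p.2) = 0 ∧ φ k p.2 = 1}
  have hB (k) : HasC1Codim (4 * finrank ℂ E + 2) (B k) := by
    have hQ : finrank ℝ (Q × Q × ℂ) = 4 * finrank ℂ E + 2 := by
      simp only [Module.finrank_prod, finrank_real_of_complex, Module.finrank_self, hdim]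
      ring
    refine hQ ▸ HasC1Codim.of_submersion ?_
    rintro ⟨⟨v, L⟩, e⟩ ⟨hv, -, hL, he⟩
    have hgv2 : ContDiffAt ℂ 2 g v := hg.contDiffAt (hU.mem_nhds hv)
    have hf := contDiffAt_incidence (φ k) (L := L) (e := e) hgv2
    refine ⟨_, hf.restrict_scalars ℝ, ?_, ?_⟩
    · rw [((hf.differentiableAt one_ne_zero).hasFDerivAt.restrictScalars ℝ).fderiv]
      exact surjective_fderiv_incidence (φ k) hgv2 (hsurj v hv) hL he
    · exact eventually_nhdsWithin_of_forall fun p ⟨_, hgp, hLp, hep⟩ => by simp [hgp, hLp, hep]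
  refine (HasC1Codim.iUnion fun k => (hB k).image (c' := 2 * finrank ℂ E + 2) contDiff_fst
    (by simp only [Module.finrank_prod, finrank_real_of_complex]; lia)).mono ?_
  rintro ⟨v, L⟩ ⟨hv, hgv, hninj⟩
  obtain ⟨e, heL, he⟩ : ∃ e, fderiv ℂ g v (L e) = 0 ∧ e ≠ 0 := by
    simpa [injective_iff_map_eq_zero] using hninj
  obtain ⟨k, hk⟩ : ∃ k, φ k e ≠ 0 := by
    by_contra! h
    exact he ((Module.finBasis ℂ E).forall_coord_eq_zero_iff.1 h)
  exact Set.mem_iUnion.2 ⟨k, ((v, L), (φ k e)⁻¹ • e),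
    ⟨hv, hgv, by simp [heL], by simp [hk]⟩, rfl⟩

end DegenerateJets

section Stratification

variable {V : Type*} [NormedAddCommGroup V] [NormedSpace ℂ V]

theorem isInvertible_of_injective {E Q : Type*} [NormedAddCommGroup E] [NormedSpace ℂ E]
    [FiniteDimensional ℂ E] [NormedAddCommGroup Q] [NormedSpace ℂ Q] [FiniteDimensional ℂ Q]
    {A : E →L[ℂ] Q} (hdim : finrank ℂ E = finrank ℂ Q) (hA : Function.Injective A) :
    A.IsInvertible :=
  ⟨.ofBijective A (LinearMap.ker_eq_bot.2 hA) (LinearMap.range_eq_top.2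
    ((LinearMap.injective_iff_surjective_of_finrank_eq_finrank hdim).1 hA)), rfl⟩

theorem eventually_isInvertible_add_smul {E Q : Type*} [NormedAddCommGroup E] [NormedSpace ℂ E]
    [FiniteDimensional ℂ E] [NormedAddCommGroup Q] [NormedSpace ℂ Q]
    (A : E →L[ℂ] Q) (e : E ≃L[ℂ] Q) :
    ∀ᶠ t in 𝓝[≠] (0 : ℂ), (A + t • (e : E →L[ℂ] Q)).IsInvertible := by
  have := e.toLinearEquiv.finiteDimensional
  let T : Module.End ℂ E := ((e.symm : Q →L[ℂ] E) ∘L A).toLinearMap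
  have hfin : ((- ·) ⁻¹' {t | T.HasEigenvalue t}).Finite :=
    T.finite_hasEigenvalue.preimage neg_injective.injOn
  filter_upwards [nhdsNE_le_cofinite 0 hfin.compl_mem_cofinite] with t ht
  refine isInvertible_of_injective e.toLinearEquiv.finrank_eq
    ((injective_iff_map_eq_zero _).2 fun x hx => ?_)
  by_contra hx0
  refine ht (Module.End.hasEigenvalue_of_hasEigenvector (x := x)
    ⟨Module.End.mem_eigenspace_iff.2 ?_, hx0⟩)
  have hAx : A x = -(t • e x) := eq_neg_of_add_eq_zero_left hx
  simp [T, hAx]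

/-- The level sets `{ρ = i}`, `i ≤ m`, stratify the closed set `{ρ ≤ m}` by submanifolds of
codimension `c i`, of which `{ρ = m}` has the smallest codimension. -/
structure IsStratification (ρ : V → ℕ) (c : ℕ → ℕ) (m : ℕ) : Prop where
  lowerSemicontinuous : LowerSemicontinuous ρ
  isSubmanifoldOfCodim : ∀ i ≤ m, IsSubmanifoldOfCodim V {v | ρ v = i} (c i)
  codim_lt : ∀ i < m, c m < c i

namespace IsStratification

variable {ρ : V → ℕ} {c : ℕ → ℕ} {m : ℕ} {v : V}

theorem isClosed (h : IsStratification ρ c m) : IsClosed {v | ρ v ≤ m} :=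
  h.lowerSemicontinuous.isClosed_preimage m

theorem codim_le (h : IsStratification ρ c m) {i : ℕ} (hi : i ≤ m) : c m ≤ c i := by
  rcases hi.lt_or_eq with hi | rfl
  exacts [(h.codim_lt i hi).le, le_rfl]

theorem hasC1Codim [FiniteDimensional ℂ V] (h : IsStratification ρ c m) :
    HasC1Codim (2 * c m) {v | ρ v ≤ m} := by
  have hstrata : HasC1Codim (2 * c m) (⋃ i : Fin (m + 1), {v | ρ v = i}) := .iUnion fun i =>
    (h.isSubmanifoldOfCodim i (Nat.le_of_lt_succ i.2)).hasC1Codim.anti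
      (Nat.mul_le_mul_left 2 (h.codim_le (Nat.le_of_lt_succ i.2)))
  exact hstrata.mono fun v hv => Set.mem_iUnion.2 ⟨⟨ρ v, Nat.lt_succ_of_le hv⟩, rfl⟩

theorem exists_chart (h : IsStratification ρ c m) (hv : ρ v = m) :
    ∃ U : Set V, IsOpen U ∧ v ∈ U ∧ ∃ g : V → EuclideanSpace ℂ (Fin (c m)),
      ContDiffOn ℂ ⊤ g U ∧ (∀ w ∈ U, ρ w ≤ m ↔ g w = 0) ∧
        ∀ w ∈ U, Function.Surjective (fderiv ℂ g w) := by
  obtain ⟨U, hU, hvU, g, hg, hgU, hsurj⟩ := h.isSubmanifoldOfCodim m le_rfl v hv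
  have hrank : ∀ᶠ w in 𝓝 v, m ≤ ρ w := by
    rcases m with _ | m
    · simp
    · exact h.lowerSemicontinuous v m (m.lt_succ_self.trans_eq hv.symm)
  have hev : ∀ᶠ w in 𝓝 v, w ∈ U ∧ m ≤ ρ w ∧ Function.Surjective (fderiv ℂ g w) :=
    (hU.eventually_mem hvU).and <| hrank.and <| eventually_surjective_fderiv
      ((hg.contDiffAt (hU.mem_nhds hvU)).of_le le_top) hsurj
  obtain ⟨U', hU', hU'open, hvU'⟩ := eventually_nhds_iff.1 hev
  refine ⟨U', hU'open, hvU', g, hg.mono fun w hw => (hU' w hw).1, fun w hw => ?_,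
    fun w hw => (hU' w hw).2.2⟩
  exact Iff.trans ⟨fun hle => hle.antisymm (hU' w hw).2.1, Eq.le⟩ (hgU w (hU' w hw).1)

theorem hasC1Codim_nonTransverseJets {E : Type*} [NormedAddCommGroup E] [NormedSpace ℂ E]
    [FiniteDimensional ℂ E] [FiniteDimensional ℂ V] (h : IsStratification ρ c m)
    (hc : c m = finrank ℂ E) :
    HasC1Codim (2 * finrank ℂ E + 2) (nonTransverseJets E {v | ρ v ≤ m}) := by
  have := FiniteDimensional.complexToReal V
  have := FiniteDimensional.complexToReal (E →L[ℂ] V)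
  have hsing (i : Fin m) : HasC1Codim (2 * finrank ℂ E + 2) {j : Jet E V | ρ j.1 = i} :=
    ((h.isSubmanifoldOfCodim i i.2.le).hasC1Codim.prod_univ.anti
      (by have := h.codim_lt i i.2; lia)).mono fun j hj => ⟨hj, trivial⟩
  have hreg : HasC1Codim (2 * finrank ℂ E + 2)
      {j : Jet E V | ρ j.1 = m ∧ ¬ IsTransverseJet {v | ρ v ≤ m} j} := by
    refine HasC1Codim.of_local fun j hj => ?_
    obtain ⟨U, hU, hjU, g, hg, hgU, hsurj⟩ := hc ▸ h.exists_chart hj.1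
    refine ⟨_, ?_, hasC1Codim_degenerate_jets hU (hg.of_le le_top) hsurj (by simp)⟩
    filter_upwards [self_mem_nhdsWithin,
      nhdsWithin_le_nhds ((hU.preimage continuous_fst).mem_nhds hjU)] with j' hj' hj'U
    refine ⟨hj'U, (hgU _ hj'U).1 hj'.1.le, fun hinj => hj'.2 ⟨hj'.1.le, g,
      (hg.contDiffAt (hU.mem_nhds hj'U)).of_le le_top,
      (hU.eventually_mem hj'U).mono hgU, ?_⟩⟩
    exact isInvertible_of_injective (by simp) hinj
  refine ((HasC1Codim.iUnion hsing).union hreg).mono ?_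
  rintro j ⟨hle : ρ j.1 ≤ m, hj⟩
  rcases hle.lt_or_eq with hlt | heq
  · exact .inl (Set.mem_iUnion.2 ⟨⟨ρ j.1, hlt⟩, rfl⟩)
  · exact .inr ⟨heq, hj⟩

theorem mem_closure_isTransverseJet {E : Type*} [NormedAddCommGroup E] [NormedSpace ℂ E]
    [FiniteDimensional ℂ E] (h : IsStratification ρ c m) (hc : c m = finrank ℂ E)
    (hv : v ∈ closure {v | ρ v = m}) (L : E →L[ℂ] V) :
    (v, L) ∈ closure {j : Jet E V | IsTransverseJet {v | ρ v ≤ m} j} := by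
  suffices hreg : {v | ρ v = m} ×ˢ {L} ⊆ closure {j : Jet E V | IsTransverseJet {v | ρ v ≤ m} j} by
    refine closure_minimal hreg isClosed_closure ?_
    rw [closure_prod_eq, closure_singleton]
    exact ⟨hv, rfl⟩
  rintro ⟨v, L'⟩ ⟨hv, hL⟩
  obtain rfl : L = L' := hL.symm
  obtain ⟨U, hU, hvU, g, hg, hgU, hsurj⟩ := hc ▸ h.exists_chart hv
  obtain ⟨R, hR⟩ := (fderiv ℂ g v).exists_rightInverse_of_surjective
    (LinearMap.range_eq_top.2 (hsurj v hvU))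
  let e : E ≃L[ℂ] EuclideanSpace ℂ (Fin (finrank ℂ E)) := .ofFinrankEq (by simp)
  have hlim : Tendsto (fun t : ℂ => ((v, L + t • (R ∘L e)) : Jet E V)) (𝓝[≠] 0) (𝓝 (v, L)) := by
    exact tendsto_nhdsWithin_of_tendsto_nhds (Continuous.tendsto' (by fun_prop) _ _ (by simp))
  refine mem_closure_of_tendsto hlim ?_
  filter_upwards [eventually_isInvertible_add_smul (fderiv ℂ g v ∘L L) e] with t ht
  refine ⟨Eq.le hv, g, (hg.contDiffAt (hU.mem_nhds hvU)).of_le le_top,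
    (hU.eventually_mem hvU).mono hgU, ?_⟩
  rwa [ContinuousLinearMap.comp_add, ContinuousLinearMap.comp_smul,
    ← ContinuousLinearMap.comp_assoc, hR, ContinuousLinearMap.id_comp]

end IsStratification

end Stratification

section Genericity

theorem surjective_fderiv_of_line {𝕜 P W : Type*} [NontriviallyNormedField 𝕜]
    [NormedAddCommGroup P] [NormedSpace 𝕜 P] [NormedAddCommGroup W] [NormedSpace 𝕜 W]
    {f : P → W} {x : P} (hf : DifferentiableAt 𝕜 f x)
    (h : ∀ w, ∃ v, ∀ s : 𝕜, f (x + s • v) = f x + s • w) : Function.Surjective (fderiv 𝕜 f x) := by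
  intro w
  obtain ⟨v, hv⟩ := h w
  have hline : HasLineDerivAt 𝕜 f w x v := by
    simpa only [HasLineDerivAt, hv, one_smul, id_eq] using
      ((hasDerivAt_id (0 : 𝕜)).smul_const w).const_add (f x)
  exact ⟨v, (hf.hasFDerivAt.hasLineDerivAt v).unique hline⟩

variable {E V : Type*} [NormedAddCommGroup E] [NormedSpace ℂ E]
  [NormedAddCommGroup V] [NormedSpace ℂ V] {S : Set V} {H : ℂ × E → V}

theorem Jet.contDiff_eval {n : WithTop ℕ∞} :
    ContDiff ℂ n fun u : Jet E V × E => u.1.eval u.2 :=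
  contDiff_fst.fst.add (contDiff_fst.snd.clm_apply contDiff_snd)

@[simp]
theorem Jet.eval_zero (p : E) : (0 : Jet E V).eval p = 0 := by
  simp [Jet.eval]

theorem Jet.hasFDerivAt_eval (θ : Jet E V) (p : E) : HasFDerivAt θ.eval θ.2 p :=
  θ.2.hasFDerivAt.const_add θ.1

theorem eventually_forall_notMem {A B V : Type*} [TopologicalSpace A] [TopologicalSpace B]
    [TopologicalSpace V] {C : Set A} (hC : IsCompact C) {S : Set V} (hS : IsClosed S)
    {f : B × A → V} (hf : Continuous f) {b : B} (h : ∀ a ∈ C, f (b, a) ∉ S) :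
    ∀ᶠ b' in 𝓝 b, ∀ a ∈ C, f (b', a) ∉ S :=
  hC.eventually_forall_of_forall_eventually fun a ha =>
    hf.continuousAt.eventually_mem (hS.isOpen_compl.mem_nhds (h a ha))

theorem eventually_forall_unitInterval_smul {X : Type*} [NormedAddCommGroup X] [NormedSpace ℂ X]
    {P : X → Prop} (h : ∀ᶠ x in 𝓝 0, P x) :
    ∀ᶠ x in 𝓝 0, ∀ s : unitInterval, P ((s : ℂ) • x) := by
  have hcont : Continuous fun u : X × unitInterval => (u.2 : ℂ) • u.1 := by fun_prop
  have hloc (s : unitInterval) : ∀ᶠ u : X × unitInterval in 𝓝 (0, s), P ((u.2 : ℂ) • u.1) :=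
    (hcont.tendsto' (0, s) 0 (smul_zero _)).eventually h
  simpa using isCompact_univ.eventually_forall_of_forall_eventually
    (P := fun x s => P (((s : unitInterval) : ℂ) • x)) fun s _ => hloc s

theorem eventually_forall_add_eval_notMem {A : Type*} [TopologicalSpace A] {C : Set A}
    (hC : IsCompact C) (hS : IsClosed S) {f : A → V} (hf : Continuous f) {π : A → E}
    (hπ : Continuous π) (h : ∀ a ∈ C, f a ∉ S) :
    ∀ᶠ θ : Jet E V in 𝓝 0, ∀ a ∈ C, f a + θ.eval (π a) ∉ S :=
  eventually_forall_notMem (f := fun u : Jet E V × A => f u.2 + u.1.eval (π u.2)) hC hS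
    ((hf.comp continuous_snd).add (Continuous.add (by fun_prop) (by fun_prop)))
    (by simpa using h)

/-- The 1-jet at `p` of the perturbation `H (s, ·) + θ`, as a function of `(θ, (s, p))`. -/
noncomputable def perturbedJet (H : ℂ × E → V) (u : Jet E V × ℝ × E) : Jet E V :=
  (H (u.2.1, u.2.2), fderiv ℂ H (u.2.1, u.2.2) ∘L .inr ℂ ℂ E) + (u.1.eval u.2.2, u.1.2)

theorem perturbedJet_eq (hH : ContDiff ℂ 1 H) (θ : Jet E V) (s : ℝ) (p : E) :
    perturbedJet H (θ, s, p) =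
      (H (s, p) + θ.eval p, fderiv ℂ (fun p => H (s, p) + θ.eval p) p) := by
  have hHs : DifferentiableAt ℂ (fun p => H (s, p)) p :=
    (hH.comp (contDiff_prodMk_right (s : ℂ))).differentiable one_ne_zero p
  refine Prod.ext rfl ?_
  rw [fderiv_fun_add hHs (θ.hasFDerivAt_eval p).differentiableAt, (θ.hasFDerivAt_eval p).fderiv]
  exact congrArg (· + θ.2) (fderiv_comp_inr (hH.differentiable one_ne_zero _))

theorem contDiff_perturbedJet (hH : ContDiff ℂ 2 H) : ContDiff ℝ 1 (perturbedJet H) := by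
  have hpoint : ContDiff ℝ 1 fun u : Jet E V × ℝ × E => ((u.2.1 : ℂ), u.2.2) :=
    (Complex.ofRealCLM.contDiff.comp contDiff_snd.fst).prodMk contDiff_snd.snd
  have hdH : ContDiff ℂ 1 fun u : ℂ × E => fderiv ℂ H u ∘L .inr ℂ ℂ E :=
    (hH.fderiv_right (m := 1) le_rfl).clm_comp contDiff_const
  have heval : ContDiff ℝ 1 fun u : Jet E V × ℝ × E => u.1.eval u.2.2 :=
    (Jet.contDiff_eval.restrict_scalars ℝ).comp (contDiff_fst.prodMk contDiff_snd.snd)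
  exact ((((hH.of_le one_le_two).restrict_scalars ℝ).comp hpoint).prodMk
    ((hdH.restrict_scalars ℝ).comp hpoint)).add (heval.prodMk contDiff_fst.snd)

theorem surjective_fderiv_perturbedJet (hH : ContDiff ℂ 2 H) (θ : Jet E V) (t : ℝ × E) :
    Function.Surjective (fderiv ℝ (fun θ => perturbedJet H (θ, t)) θ) := by
  refine surjective_fderiv_of_line
    (((contDiff_perturbedJet hH).comp (contDiff_prodMk_left t)).differentiable one_ne_zero θ)
    fun w => ⟨(w.1 - w.2 t.2, w.2), fun s => ?_⟩
  refine Prod.ext ?_ ?_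
  · simp only [perturbedJet, Jet.eval, Prod.fst_add, Prod.snd_add, Prod.smul_fst, Prod.smul_mk,
      Prod.mk_add_mk, smul_sub, add_apply, smul_apply]
    abel
  · simp [perturbedJet, add_assoc]

variable [FiniteDimensional ℂ E] [FiniteDimensional ℂ V]

theorem dense_forall_isTransverseHit_path
    (hjets : HasC1Codim (2 * finrank ℂ E + 2) (nonTransverseJets E S))
    (hH : ContDiff ℂ 2 H) :
    Dense {θ : Jet E V | ∀ (s : ℝ) (p : E), H (s, p) + θ.eval p ∈ S →
      IsTransverseHit S (fun p => H (s, p) + θ.eval p) p} := by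
  have := FiniteDimensional.complexToReal V
  have := FiniteDimensional.complexToReal (E →L[ℂ] V)
  have hT : finrank ℝ (ℝ × E) = 2 * finrank ℂ E + 1 := by
    rw [Module.finrank_prod, Module.finrank_self, finrank_real_of_complex, add_comm]
  have hcodim := HasC1Codim.exists_mem_of_submersion (c := 1) (a := 0) (M := Set.univ)
    HasC1Codim.zero hjets (contDiff_perturbedJet hH)
    (fun θ t _ => surjective_fderiv_perturbedJet hH θ t) (by rw [hT]; lia)
  refine (hcodim.dense_compl one_pos).mono fun θ hθ s p hp => ?_
  by_contra hnot
  refine hθ ⟨(s, p), trivial, ?_⟩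
  rw [perturbedJet_eq (hH.of_le one_le_two)]
  exact ⟨hp, hnot⟩

theorem dense_forall_isTransverseHit
    (hjets : HasC1Codim (2 * finrank ℂ E + 2) (nonTransverseJets E S))
    {G : E → V} (hG : ContDiff ℂ 2 G) :
    Dense {θ : Jet E V | ∀ p : E, G p + θ.eval p ∈ S →
      IsTransverseHit S (fun p => G p + θ.eval p) p} := by
  refine (dense_forall_isTransverseHit_path hjets (H := fun u => G u.2)
    (hG.comp contDiff_snd)).mono fun _ hθ => ?_
  exact hθ 0

theorem encard_isTransverseHit_le (hS : IsClosed S)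
    (hjets : HasC1Codim (2 * finrank ℂ E + 2) (nonTransverseJets E S))
    {H : ℂ × E → V} (hH : ContDiff ℂ 2 H) {Ω K : Set E} (hΩ : IsOpen Ω) (hK : IsCompact K)
    (hΩK : Ω ⊆ K) (hbd : ∀ s : unitInterval, ∀ p ∈ K, H (s, p) ∈ S → p ∈ Ω)
    (h1 : ∀ p ∈ K, H (1, p) ∈ S → IsTransverseHit S (fun p => H (1, p)) p) :
    {p ∈ Ω | IsTransverseHit S (fun p => H (0, p)) p}.encard ≤ {p ∈ Ω | H (1, p) ∈ S}.encard := by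
  have := FiniteDimensional.complete ℂ E
  have := FiniteDimensional.complete ℂ V
  have hG (s : ℂ) : ContDiff ℂ 1 fun u : Jet E V × E => H (s, u.2) + u.1.eval u.2 :=
    ((hH.of_le one_le_two).comp (contDiff_const.prodMk contDiff_snd)).add Jet.contDiff_eval
  refine ENat.forall_natCast_le_iff_le.1 fun k hk => ?_
  obtain ⟨A, hA, hAk⟩ := Set.exists_subset_encard_eq hk
  have hA0 : ∀ᶠ θ : Jet E V in 𝓝 0, A.encard ≤ {p ∈ Ω | H (0, p) + θ.eval p ∈ S}.encard := by
    refine encard_le_encard_hits (Set.finite_of_encard_eq_coe hAk) (hG 0) hΩ fun p hp => ?_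
    simpa using hA hp
  have hB1 : ∀ᶠ θ : Jet E V in 𝓝 0,
      {p ∈ Ω | H (1, p) + θ.eval p ∈ S}.encard = {p ∈ Ω | H (1, p) ∈ S}.encard := by
    have hhit (p : E) (hp : p ∈ K) (hpS : H (1, p) ∈ S) :
        p ∈ Ω ∧ IsTransverseHit S (fun p => H (1, p)) p :=
      ⟨hbd 1 p hp (by simpa using hpS), h1 p hp hpS⟩
    simpa using eventually_encard_hits_eq (l := (0 : Jet E V)) hS (hG 1) hΩ hK hΩK
      (by simpa using hhit)
  have hbd' : ∀ᶠ θ : Jet E V in 𝓝 0, ∀ a ∈ (Set.univ : Set unitInterval) ×ˢ (K \ Ω),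
      H (a.1, a.2) + θ.eval a.2 ∉ S := by
    refine eventually_forall_add_eval_notMem (isCompact_univ.prod (hK.diff hΩ)) hS
      (hH.continuous.comp (by fun_prop)) continuous_snd fun a ha haS => ?_
    exact ha.2.2 (hbd a.1 a.2 ha.2.1 haS)
  obtain ⟨θ, hθ, hθA, hθB, hθbd⟩ :=
    ((mem_closure_iff_frequently.1 (dense_forall_isTransverseHit_path hjets hH 0)).and_eventually
      (hA0.and (hB1.and hbd'))).exists
  have hHθ : ContDiff ℂ 1 fun u : ℂ × E => H u + θ.eval u.2 :=
    (hH.of_le one_le_two).add (Jet.contDiff_eval.comp (contDiff_const.prodMk contDiff_snd))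
  calc (k : ℕ∞) = A.encard := hAk.symm
    _ ≤ {p ∈ Ω | H (0, p) + θ.eval p ∈ S}.encard := hθA
    _ = {p ∈ Ω | H (1, p) + θ.eval p ∈ S}.encard :=
      encard_hits_eq_of_path hS hHθ hΩ hK hΩK fun s p hp hpS => ⟨by_contra fun hpΩ =>
        hθbd (s, p) ⟨trivial, hp, hpΩ⟩ hpS, hθ s p hpS⟩
    _ = {p ∈ Ω | H (1, p) ∈ S}.encard := hθB

theorem finite_isTransverseHit (hS : IsClosed S)
    (hjets : HasC1Codim (2 * finrank ℂ E + 2) (nonTransverseJets E S))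
    {G : E → V} (hG : ContDiff ℂ 2 G) {Ω K : Set E} (hΩ : IsOpen Ω) (hK : IsCompact K)
    (hΩK : Ω ⊆ K) (hbd : ∀ p ∈ K, G p ∈ S → p ∈ Ω) :
    {p ∈ Ω | IsTransverseHit S G p}.Finite := by
  have := FiniteDimensional.complete ℂ E
  have hnohit : ∀ᶠ θ : Jet E V in 𝓝 0, ∀ p ∈ K \ Ω, G p + θ.eval p ∉ S :=
    eventually_forall_add_eval_notMem (hK.diff hΩ) hS hG.continuous continuous_id
      fun p hp hpS => hp.2 (hbd p hp.1 hpS)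
  obtain ⟨θ, hθ, hθnohit⟩ := ((mem_closure_iff_frequently.1 <|
    dense_forall_isTransverseHit hjets hG 0).and_eventually
      (eventually_forall_unitInterval_smul hnohit)).exists
  let H (u : ℂ × E) : V := G u.2 + (u.1 • θ).eval u.2
  have hH : ContDiff ℂ 2 H := (hG.comp contDiff_snd).add
    (Jet.contDiff_eval.comp ((contDiff_fst.smul contDiff_const).prodMk contDiff_snd))
  have hH1 (p : E) (hp : H (1, p) ∈ S) : IsTransverseHit S (fun p => H (1, p)) p := by
    simp only [H, one_smul] at hp ⊢
    exact hθ p hp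
  have hfin : {p ∈ Ω | H (1, p) ∈ S}.Finite :=
    (finite_hits hS ((hH.of_le one_le_two).comp (contDiff_prodMk_right 1)) hK
      fun p _ => hH1 p).subset fun p hp => ⟨hΩK hp.1, hp.2⟩
  have hle := encard_isTransverseHit_le hS hjets hH hΩ hK hΩK
    (fun s p hp hpS => by_contra fun hpΩ => hθnohit s p ⟨hp, hpΩ⟩ hpS) fun p _ => hH1 p
  simp only [H, zero_smul, Jet.eval_zero, add_zero] at hle
  exact Set.encard_lt_top_iff.1 (hle.trans_lt hfin.encard_lt_top)

end Genericity

section Smoothings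

variable {Z V : Type*} [NormedAddCommGroup Z] [NormedSpace ℂ Z]
  [NormedAddCommGroup V] [NormedSpace ℂ V] {S : Set V} {F : Z → V}

/-- A smoothing of the germ at `0` of `F⁻¹(S)`: a holomorphic one-parameter deformation of `F` whose
fibers over small nonzero parameters avoid `S` on a fixed neighborhood of the origin. -/
def HasSmoothing (S : Set V) (F : Z → V) : Prop :=
  ∃ Ft : Z × ℂ → V, ContDiff ℂ ⊤ Ft ∧ (∀ z, Ft (z, 0) = F z) ∧
    ∃ W ∈ 𝓝 (0 : Z), ∀ᶠ y in 𝓝[≠] (0 : ℂ), ∀ z ∈ W, Ft (z, y) ∉ S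

theorem hasC1Codim_sphere {E : Type*} [NormedAddCommGroup E] [InnerProductSpace ℝ E]
    [FiniteDimensional ℝ E] : HasC1Codim 1 (Metric.sphere (0 : E) 1) := by
  refine Module.finrank_self ℝ ▸ HasC1Codim.of_submersion fun x hx => ?_
  have hf : ContDiff ℝ 1 fun x : E => ‖x‖ ^ 2 - 1 := (contDiff_norm_sq ℝ).sub contDiff_const
  refine ⟨_, hf.contDiffAt, ?_, ?_⟩
  · rw [((hasStrictFDerivAt_norm_sq x).hasFDerivAt.sub_const 1).fderiv]
    exact fun t => ⟨(t / 2) • x, by simp [mem_sphere_zero_iff_norm.1 hx]⟩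
  · exact eventually_nhdsWithin_of_forall fun y hy => by simp [mem_sphere_zero_iff_norm.1 hy]

theorem dense_forall_sphere_notMem [FiniteDimensional ℂ Z] {N : ℕ} {X : Set Z}
    (hX : HasC1Codim (2 * N) X) :
    Dense {J : EuclideanSpace ℂ (Fin N) →L[ℂ] Z | ∀ e ∈ Metric.sphere 0 1, J e ∉ X} := by
  have := FiniteDimensional.complexToReal Z
  have := FiniteDimensional.complexToReal (EuclideanSpace ℂ (Fin N) →L[ℂ] Z)
  let Φ (u : (EuclideanSpace ℂ (Fin N) →L[ℂ] Z) × EuclideanSpace ℂ (Fin N)) : Z := u.1 u.2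
  have hΦ : ContDiff ℂ 1 Φ := contDiff_fst.clm_apply contDiff_snd
  have hsurj (J : EuclideanSpace ℂ (Fin N) →L[ℂ] Z) (e : EuclideanSpace ℂ (Fin N))
      (he : e ∈ Metric.sphere 0 1) : Function.Surjective (fderiv ℝ (fun J => Φ (J, e)) J) := by
    refine surjective_fderiv_of_line ((((hΦ.restrict_scalars ℝ).comp
      (contDiff_prodMk_left e)).differentiable one_ne_zero) J) fun w => ?_
    exact ⟨(innerSL ℂ e).smulRight w, fun s => by simp [Φ, mem_sphere_zero_iff_norm.1 he]⟩
  have hcodim := hasC1Codim_sphere.exists_mem_of_submersion (c := 1) hX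
    (hΦ.restrict_scalars ℝ) hsurj (by rw [finrank_real_of_complex]; simp)
  refine (hcodim.dense_compl one_pos).mono fun J hJ => ?_
  exact fun e he heX => hJ ⟨e, he, heX⟩

theorem exists_slice [FiniteDimensional ℂ Z] {N : ℕ} {U X : Set Z} (hU : U ∈ 𝓝 0)
    (hX : HasC1Codim (2 * N) X) :
    ∃ J : EuclideanSpace ℂ (Fin N) →L[ℂ] Z,
      (∀ e ∈ Metric.closedBall 0 1, J e ∈ U) ∧ ∀ e ∈ Metric.sphere 0 1, J e ∉ X := by
  obtain ⟨ε, hε, hball⟩ := Metric.mem_nhds_iff.1 hU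
  obtain ⟨J, hJε, hJ⟩ := Metric.dense_iff.1 (dense_forall_sphere_notMem hX) 0 ε hε
  refine ⟨J, fun e he => hball (mem_ball_zero_iff.2 ?_), hJ⟩
  exact (J.le_of_opNorm_le_of_le le_rfl (mem_closedBall_zero_iff.1 he)).trans_lt
    (by simpa using hJε)

theorem exists_hit_of_mem_closure {E : Type*} [NormedAddCommGroup E] [NormedSpace ℂ E]
    [FiniteDimensional ℂ E] [FiniteDimensional ℂ V] (hS : IsClosed S)
    (hjets : HasC1Codim (2 * finrank ℂ E + 2) (nonTransverseJets E S))
    {H : ℂ × E → V} (hH : ContDiff ℂ 2 H) {Ω K : Set E} (hΩ : IsOpen Ω) (hK : IsCompact K)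
    (hΩK : Ω ⊆ K) (h0 : 0 ∈ Ω) (hcl : (H (0, 0), fderiv ℂ (fun p => H (0, p)) 0) ∈
      closure {j | IsTransverseJet S j})
    (hbd : ∀ s : unitInterval, ∀ p ∈ K \ Ω, H (s, p) ∉ S) : ∃ p ∈ K, H (1, p) ∈ S := by
  by_contra! h1
  set j₀ : Jet E V := (H (0, 0), fderiv ℂ (fun p => H (0, p)) 0) with hj₀
  let C : Set (unitInterval × E) := Set.univ ×ˢ (K \ Ω) ∪ {1} ×ˢ K
  have hC : IsCompact C :=
    (isCompact_univ.prod (hK.diff hΩ)).union (isCompact_singleton.prod hK)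
  have hCS : ∀ a ∈ C, H (a.1, a.2) ∉ S := by
    rintro ⟨s, p⟩ (⟨-, hp⟩ | ⟨rfl : s = 1, hp⟩)
    exacts [hbd s p hp, by simpa using h1 p hp]
  have hlim : Tendsto (fun j => j - j₀) (𝓝 j₀) (𝓝 0) :=
    (continuous_sub_right j₀).tendsto' _ _ (sub_self j₀)
  obtain ⟨j, hj, hjS⟩ := ((mem_closure_iff_frequently.1 hcl).and_eventually <| hlim.eventually <|
    eventually_forall_add_eval_notMem hC hS (hH.continuous.comp (by fun_prop)) continuous_snd
      hCS).exists
  let G (u : ℂ × E) : V := H u + Jet.eval (j - j₀) u.2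
  have hG : ContDiff ℂ 2 G :=
    hH.add (Jet.contDiff_eval.comp (contDiff_const.prodMk contDiff_snd))
  have hhit : IsTransverseHit S (fun p => G (0, p)) 0 := by
    have hH0 : DifferentiableAt ℂ (fun p => H (0, p)) 0 :=
      (hH.comp (contDiff_prodMk_right 0)).differentiable two_ne_zero 0
    have hjet : ((G (0, 0), fderiv ℂ (fun p => G (0, p)) 0) : Jet E V) = j := by
      have heval := Jet.hasFDerivAt_eval (j - j₀) 0
      rw [fderiv_fun_add hH0 heval.differentiableAt, heval.fderiv]
      simp [G, Jet.eval, hj₀]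
    rw [IsTransverseHit, hjet]
    exact hj
  have hle := encard_isTransverseHit_le hS hjets hG hΩ hK hΩK
    (fun s p hp hpS => by_contra fun hpΩ => hjS (s, p) (.inl ⟨trivial, hp, hpΩ⟩) hpS)
    (fun p hp hpS => absurd hpS (by simpa using hjS (1, p) (.inr ⟨rfl, hp⟩)))
  have hempty : {p ∈ Ω | G (1, p) ∈ S} = ∅ := Set.eq_empty_of_forall_notMem fun p hp =>
    hjS (1, p) (.inr ⟨rfl, hΩK hp.1⟩) (by simpa using hp.2)
  rw [hempty, Set.encard_empty, nonpos_iff_eq_zero, Set.encard_eq_zero] at hle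
  exact Set.eq_empty_iff_forall_notMem.1 hle 0 ⟨h0, hhit⟩

theorem not_hasSmoothing [FiniteDimensional ℂ V] [FiniteDimensional ℂ Z] {N : ℕ} (hS : IsClosed S)
    (hjets : HasC1Codim (2 * N + 2) (nonTransverseJets (EuclideanSpace ℂ (Fin N)) S))
    {U : Set Z} (hU : U ∈ 𝓝 0) (hX : HasC1Codim (2 * N) {z ∈ U | F z ∈ S})
    (hF0 : ∀ L : EuclideanSpace ℂ (Fin N) →L[ℂ] V,
      (F 0, L) ∈ closure {j | IsTransverseJet S j}) : ¬ HasSmoothing S F := by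
  rintro ⟨Ft, hFt, hFt0, W, hW, havoid⟩
  obtain ⟨J, hJUW, hJ⟩ := exists_slice (inter_mem hU hW) hX
  have hsphere : ∀ᶠ y in 𝓝 (0 : ℂ), ∀ e ∈ Metric.sphere 0 1, Ft (J e, y) ∉ S := by
    refine eventually_forall_notMem (f := fun u => Ft (J u.2, u.1)) (isCompact_sphere 0 1) hS
      (hFt.continuous.comp (by fun_prop)) fun e he heS => hJ e he ?_
    exact ⟨(hJUW e (Metric.sphere_subset_closedBall he)).1, hFt0 (J e) ▸ heS⟩
  obtain ⟨y, hyW, hy⟩ := (havoid.and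
    (nhdsWithin_le_nhds (eventually_forall_unitInterval_smul hsphere))).exists
  obtain ⟨e, he, heS⟩ := exists_hit_of_mem_closure (H := fun u => Ft (J u.2, u.1 * y)) hS
    (by simpa using hjets) (hFt.of_le le_top |>.comp (by fun_prop)) Metric.isOpen_ball
    (isCompact_closedBall (0 : EuclideanSpace ℂ (Fin N)) 1) Metric.ball_subset_closedBall
    (Metric.mem_ball_self one_pos) (by simpa [hFt0] using hF0 _)
    (fun s e he => hy s e (by simpa [Metric.closedBall_sdiff_ball] using he))
  exact hyW _ (hJUW e he).2 (by simpa using heS)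

end Smoothings

section Deformations

theorem exists_isolating_box {Z V : Type*} [NormedAddCommGroup Z] [ProperSpace Z]
    [TopologicalSpace V] {S : Set V} (hS : IsClosed S) {G : Z × ℂ → V} (hG : Continuous G)
    {U : Set Z} (hU : U ∈ 𝓝 0) (hUS : ∀ z ∈ U, G (z, 0) ∈ S → z = 0)
    (hcount : {u : Z × ℂ | u.2 ≠ 0 ∧ G u ∈ S}.Countable) :
    ∃ ε > 0, ∃ δ > 0, ∀ u ∈ Metric.closedBall (0 : Z) ε ×ˢ Metric.closedBall (0 : ℂ) δ,
      G u ∈ S → u ∈ Metric.ball (0 : Z) ε ×ˢ Metric.ball (0 : ℂ) δ := by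
  obtain ⟨ε, hε, hεU⟩ := Metric.nhds_basis_closedBall.mem_iff.1 hU
  have hsphere : ∀ᶠ y in 𝓝 (0 : ℂ), ∀ z ∈ Metric.sphere (0 : Z) ε, G (z, y) ∉ S :=
    eventually_forall_notMem (f := fun u => G (u.2, u.1)) (isCompact_sphere 0 ε) hS
      (hG.comp continuous_swap) fun z hz hzS => ne_zero_of_mem_sphere hε.ne' ⟨z, hz⟩ <|
        hUS z (hεU (Metric.sphere_subset_closedBall hz)) hzS
  obtain ⟨δ₀, hδ₀, hball⟩ := Metric.eventually_nhds_iff_ball.1 hsphere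
  obtain ⟨δ, hδ, hδpos, hδlt⟩ :=
    ((hcount.image fun u => ‖u.2‖).dense_compl ℝ).exists_between hδ₀
  refine ⟨ε, hε, δ, hδpos, fun u hu huS => ⟨?_, ?_⟩⟩
  · refine Metric.mem_ball.2 ((Metric.mem_closedBall.1 hu.1).lt_of_ne fun hz => ?_)
    exact hball u.2 (Metric.closedBall_subset_ball hδlt hu.2) u.1 hz huS
  · refine mem_ball_zero_iff.2 ((mem_closedBall_zero_iff.1 hu.2).lt_of_ne fun hy => ?_)
    exact hδ ⟨u, ⟨norm_pos_iff.1 (hy ▸ hδpos), huS⟩, hy⟩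

variable {Z V : Type*} [NormedAddCommGroup Z] [NormedSpace ℂ Z]
  [NormedAddCommGroup V] [NormedSpace ℂ V] {S : Set V} {F : Z → V}

/-- The deformation `(z, y) ↦ F z + y (θ.1 + θ.2 (z, y))` of `F`. -/
noncomputable def deformation (F : Z → V) (θ : Jet (Z × ℂ) V) (u : Z × ℂ) : V :=
  F u.1 + u.2 • θ.eval u

theorem Jet.eval_add_smul {E : Type*} [NormedAddCommGroup E] [NormedSpace ℂ E] (θ θ' : Jet E V)
    (s : ℝ) (p : E) : (θ + s • θ').eval p = θ.eval p + s • θ'.eval p := by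
  simp only [Jet.eval, Prod.fst_add, Prod.snd_add, Prod.smul_fst, Prod.smul_snd, add_apply,
    smul_apply, smul_add]
  abel

theorem deformation_add_smul (θ θ' : Jet (Z × ℂ) V) (s : ℝ) (u : Z × ℂ) :
    deformation F (θ + s • θ') u = deformation F θ u + s • u.2 • θ'.eval u := by
  rw [deformation, Jet.eval_add_smul, smul_add, smul_comm u.2 s, ← add_assoc, deformation]

theorem contDiff_deformation {n : WithTop ℕ∞} (hF : ContDiff ℂ n F) :
    ContDiff ℂ n fun u : Jet (Z × ℂ) V × (Z × ℂ) => deformation F u.1 u.2 :=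
  (hF.comp contDiff_snd.fst).add (contDiff_snd.snd.smul Jet.contDiff_eval)

theorem fderiv_deformation (hF : Differentiable ℂ F) (θ : Jet (Z × ℂ) V) (u : Z × ℂ) :
    fderiv ℂ (deformation F θ) u = fderiv ℂ F u.1 ∘L .fst ℂ Z ℂ +
      (u.2 • θ.2 + (ContinuousLinearMap.snd ℂ Z ℂ).smulRight (θ.eval u)) :=
  (((hF u.1).hasFDerivAt.comp u hasFDerivAt_fst).add
    (hasFDerivAt_snd.smul (θ.hasFDerivAt_eval u))).fderiv

theorem fderiv_deformation_add_smul (hF : Differentiable ℂ F) (θ θ' : Jet (Z × ℂ) V) (s : ℝ)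
    (u : Z × ℂ) :
    fderiv ℂ (deformation F (θ + s • θ')) u = fderiv ℂ (deformation F θ) u +
      s • (u.2 • θ'.2 + (ContinuousLinearMap.snd ℂ Z ℂ).smulRight (θ'.eval u)) := by
  refine ContinuousLinearMap.ext fun v => ?_
  simp only [fderiv_deformation hF, Jet.eval_add_smul, Prod.snd_add, Prod.smul_snd, add_apply,
    smul_apply, ContinuousLinearMap.smulRight_apply, smul_add, smul_comm _ s]
  abel

theorem forall_deformation_notMem_of_finite {θ : Jet (Z × ℂ) V} {Ω : Set (Z × ℂ)}
    (hθ : ∀ u : Z × ℂ, u.2 ≠ 0 → deformation F θ u ∈ S → IsTransverseHit S (deformation F θ) u)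
    (hfin : {u ∈ Ω | IsTransverseHit S (deformation F θ) u}.Finite) :
    ∀ᶠ y in 𝓝[≠] (0 : ℂ), ∀ z, (z, y) ∈ Ω → deformation F θ (z, y) ∉ S := by
  have hev : ∀ᶠ y in 𝓝[≠] (0 : ℂ),
      y ∉ Prod.snd '' {u ∈ Ω | IsTransverseHit S (deformation F θ) u} :=
    (hfin.image Prod.snd).eventually_cofinite_notMem.filter_mono (nhdsNE_le_cofinite 0)
  filter_upwards [hev, self_mem_nhdsWithin] with y hy hy0 z hzΩ hzS
  exact hy ⟨(z, y), ⟨hzΩ, hθ (z, y) hy0 hzS⟩, rfl⟩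

variable [FiniteDimensional ℂ Z] [FiniteDimensional ℂ V]

theorem dense_forall_deformation_notMem {N : ℕ} (hS : HasC1Codim (2 * N) S)
    (hF : ContDiff ℂ 1 F) (hN : finrank ℂ Z + 1 < N) :
    Dense {θ : Jet (Z × ℂ) V | ∀ u : Z × ℂ, u.2 ≠ 0 → deformation F θ u ∉ S} := by
  have := FiniteDimensional.complexToReal V
  have := FiniteDimensional.complexToReal (Z × ℂ →L[ℂ] V)
  have hG := (contDiff_deformation (n := 1) hF).restrict_scalars ℝ
  have hsurj (θ : Jet (Z × ℂ) V) (u : Z × ℂ) (hu : u ∈ {u : Z × ℂ | u.2 ≠ 0}) :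
      Function.Surjective (fderiv ℝ (fun θ => deformation F θ u) θ) := by
    refine surjective_fderiv_of_line
      ((hG.comp (contDiff_prodMk_left u)).differentiable one_ne_zero θ)
      fun w => ?_
    let θ' : Jet (Z × ℂ) V := (u.2⁻¹ • w, 0)
    have heval : u.2 • θ'.eval u = w := by simp [θ', Jet.eval, smul_inv_smul₀ hu]
    exact ⟨θ', fun s => by rw [deformation_add_smul, heval]⟩
  have hcodim := HasC1Codim.zero.exists_mem_of_submersion (c := 1) hS hG hsurj
    (by simp [finrank_real_of_complex]; lia)
  refine (hcodim.dense_compl one_pos).mono fun θ hθ => ?_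
  exact fun u hu huS => hθ ⟨u, hu, huS⟩

theorem dense_forall_isTransverseHit_deformation
    (hjets : HasC1Codim (2 * finrank ℂ (Z × ℂ) + 2) (nonTransverseJets (Z × ℂ) S))
    (hF : ContDiff ℂ 2 F) :
    Dense {θ : Jet (Z × ℂ) V | ∀ u : Z × ℂ, u.2 ≠ 0 → deformation F θ u ∈ S →
      IsTransverseHit S (deformation F θ) u} := by
  have := FiniteDimensional.complexToReal V
  have := FiniteDimensional.complexToReal (Z × ℂ →L[ℂ] V)
  let Φ (u : Jet (Z × ℂ) V × (Z × ℂ)) : Jet (Z × ℂ) V :=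
    (deformation F u.1 u.2, fderiv ℂ (deformation F u.1) u.2)
  have hΦ : ContDiff ℝ 1 Φ := by
    have hG := contDiff_deformation hF
    refine ContDiff.restrict_scalars ℝ (𝕜' := ℂ) ((hG.of_le one_le_two).prodMk ?_)
    exact ContDiff.fderiv (f := fun x : Jet (Z × ℂ) V × (Z × ℂ) => deformation F x.1)
      (hG.comp (contDiff_fst.fst.prodMk contDiff_snd)) contDiff_snd le_rfl
  have hsurj (θ : Jet (Z × ℂ) V) (u : Z × ℂ) (hu : u ∈ {u : Z × ℂ | u.2 ≠ 0}) :
      Function.Surjective (fderiv ℝ (fun θ => Φ (θ, u)) θ) := by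
    refine surjective_fderiv_of_line
      ((hΦ.comp (contDiff_prodMk_left u)).differentiable one_ne_zero θ)
      fun w => ?_
    let A : Z × ℂ →L[ℂ] V :=
      u.2⁻¹ • (w.2 - (ContinuousLinearMap.snd ℂ Z ℂ).smulRight (u.2⁻¹ • w.1))
    let θ' : Jet (Z × ℂ) V := (u.2⁻¹ • w.1 - A u, A)
    have heval : u.2 • θ'.eval u = w.1 := by simp [θ', Jet.eval, smul_inv_smul₀ hu]
    have hderiv : u.2 • θ'.2 + (ContinuousLinearMap.snd ℂ Z ℂ).smulRight (θ'.eval u) = w.2 := by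
      simp [A, θ', Jet.eval, smul_inv_smul₀ hu]
    refine ⟨θ', fun s => Prod.ext ?_ ?_⟩
    · simp only [Φ, deformation_add_smul, heval, Prod.fst_add, Prod.smul_fst]
    · simp only [Φ, fderiv_deformation_add_smul (hF.differentiable two_ne_zero), hderiv,
        Prod.snd_add, Prod.smul_snd]
  have hcodim := HasC1Codim.zero.exists_mem_of_submersion (c := 1) hjets hΦ hsurj
    (by rw [finrank_real_of_complex]; lia)
  refine (hcodim.dense_compl one_pos).mono fun θ hθ => ?_
  exact fun u hu huS => by_contra fun hnot => hθ ⟨u, hu, huS, hnot⟩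

theorem hasSmoothing_of_lt {N : ℕ} (hcodim : HasC1Codim (2 * N) S)
    (hF : ContDiff ℂ ⊤ F) (hN : finrank ℂ Z + 1 < N) : HasSmoothing S F := by
  obtain ⟨θ, hθ⟩ := (dense_forall_deformation_notMem hcodim (hF.of_le le_top) hN).nonempty
  refine ⟨deformation F θ, (contDiff_deformation hF).comp (contDiff_prodMk_right θ),
    fun z => by simp [deformation], Set.univ, univ_mem, ?_⟩
  exact eventually_nhdsWithin_of_forall fun y hy z _ => hθ (z, y) hy

theorem hasSmoothing_of_eq (hS : IsClosed S)
    (hjets : HasC1Codim (2 * finrank ℂ (Z × ℂ) + 2) (nonTransverseJets (Z × ℂ) S))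
    (hF : ContDiff ℂ ⊤ F) {U : Set Z} (hU : U ∈ 𝓝 0) (hUS : ∀ z ∈ U, F z ∈ S → z = 0) :
    HasSmoothing S F := by
  have := FiniteDimensional.complete ℂ (Z × ℂ)
  obtain ⟨θ, hθ⟩ :=
    (dense_forall_isTransverseHit_deformation hjets (hF.of_le le_top)).nonempty
  have hG : ContDiff ℂ ⊤ (deformation F θ) :=
    (contDiff_deformation hF).comp (contDiff_prodMk_right θ)
  have hG0 (z : Z) : deformation F θ (z, 0) = F z := by simp [deformation]
  have hcount : {u : Z × ℂ | u.2 ≠ 0 ∧ deformation F θ u ∈ S}.Countable := by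
    refine (HereditarilyLindelofSpace.isLindelof _).countable_of_isDiscrete ?_
    exact isDiscrete_of_isTransverseHit (hG.of_le le_top) fun u hu => hθ u hu.1 hu.2
  obtain ⟨ε, hε, δ, hδ, hbox⟩ :=
    exists_isolating_box hS hG.continuous hU (by simpa only [hG0] using hUS) hcount
  have hfin := finite_isTransverseHit hS hjets (hG.of_le le_top)
    (Metric.isOpen_ball.prod Metric.isOpen_ball)
    ((isCompact_closedBall 0 ε).prod (isCompact_closedBall 0 δ))
    (Set.prod_mono Metric.ball_subset_closedBall Metric.ball_subset_closedBall) hbox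
  refine ⟨_, hG, hG0, Metric.ball 0 ε, Metric.ball_mem_nhds 0 hε, ?_⟩
  filter_upwards [forall_deformation_notMem_of_finite hθ hfin,
    nhdsWithin_le_nhds (Metric.ball_mem_nhds 0 hδ)] with y hy hyδ z hz
  exact hy z ⟨hz, hyδ⟩

end Deformations

namespace IsStratification

variable {Z V : Type*} [NormedAddCommGroup Z] [NormedSpace ℂ Z] [FiniteDimensional ℂ Z]
  [NormedAddCommGroup V] [NormedSpace ℂ V]
  {ρ : V → ℕ} {c : ℕ → ℕ} {m : ℕ} {F : Z → V}

theorem exists_hasC1Codim_preimage (h : IsStratification ρ c m)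
    (hcodim : ∀ i ≤ m, ∃ U ∈ 𝓝 (0 : Z),
      IsSubmanifoldOfCodim Z {z | z ∈ U \ {0} ∧ ρ (F z) = i} (c i)) (hm : c m ≤ finrank ℂ Z) :
    ∃ U ∈ 𝓝 (0 : Z), HasC1Codim (2 * c m) {z ∈ U | ρ (F z) ≤ m} := by
  choose! U hU hsub using hcodim
  refine ⟨⋂ i : Fin (m + 1), U i, iInter_mem.2 fun i => hU i (Nat.le_of_lt_succ i.2), ?_⟩
  have hstrata : HasC1Codim (2 * c m)
      (⋃ i : Fin (m + 1), {z | z ∈ U i \ {0} ∧ ρ (F z) = i}) := .iUnion fun i =>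
    (hsub i (Nat.le_of_lt_succ i.2)).hasC1Codim.anti
      (Nat.mul_le_mul_left 2 (h.codim_le (Nat.le_of_lt_succ i.2)))
  have hzero : HasC1Codim (2 * c m) {(0 : Z)} := (HasC1Codim.singleton 0).anti
    ((Nat.mul_le_mul_left 2 hm).trans_eq (finrank_real_of_complex Z).symm)
  refine (hzero.union hstrata).mono fun z ⟨hzU, hz⟩ => ?_
  refine or_iff_not_imp_left.2 fun hz0 => Set.mem_iUnion.2 ⟨⟨ρ (F z), Nat.lt_succ_of_le hz⟩, ?_⟩
  exact ⟨⟨Set.mem_iInter.1 hzU _, hz0⟩, rfl⟩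

theorem exists_forall_eq_zero (h : IsStratification ρ c m)
    (hcodim : ∀ i ≤ m, ∃ U ∈ 𝓝 (0 : Z),
      IsSubmanifoldOfCodim Z {z | z ∈ U \ {0} ∧ ρ (F z) = i} (c i)) (hm : finrank ℂ Z < c m) :
    ∃ U ∈ 𝓝 (0 : Z), ∀ z ∈ U, ρ (F z) ≤ m → z = 0 := by
  choose! U hU hsub using hcodim
  refine ⟨⋂ i : Fin (m + 1), U i, iInter_mem.2 fun i => hU i (Nat.le_of_lt_succ i.2), ?_⟩
  intro z hzU hz
  by_contra hz0
  have hempty := (hsub _ hz).eq_empty (hm.trans_le (h.codim_le hz))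
  exact Set.eq_empty_iff_forall_notMem.1 hempty z
    ⟨⟨Set.mem_iInter.1 hzU ⟨ρ (F z), Nat.lt_succ_of_le hz⟩, hz0⟩, rfl⟩

theorem hasSmoothing_iff [FiniteDimensional ℂ V] (h : IsStratification ρ c m) (hF : ContDiff ℂ ⊤ F)
    (hF0 : F 0 ∈ closure {v | ρ v = m})
    (hcodim : ∀ i ≤ m, ∃ U ∈ 𝓝 (0 : Z),
      IsSubmanifoldOfCodim Z {z | z ∈ U \ {0} ∧ ρ (F z) = i} (c i)) :
    HasSmoothing {v | ρ v ≤ m} F ↔ finrank ℂ Z < c m := by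
  refine ⟨fun hsmooth => ?_, fun hm => ?_⟩
  · by_contra! hm
    obtain ⟨U, hU, hX⟩ := h.exists_hasC1Codim_preimage hcodim hm
    have hdim : c m = finrank ℂ (EuclideanSpace ℂ (Fin (c m))) := by simp
    have hjets := h.hasC1Codim_nonTransverseJets hdim
    exact not_hasSmoothing h.isClosed (by simpa using hjets) hU hX
      (h.mem_closure_isTransverseJet hdim hF0) hsmooth
  · obtain hlt | heq := (Nat.succ_le_of_lt hm).lt_or_eq
    · exact hasSmoothing_of_lt h.hasC1Codim hF hlt
    · obtain ⟨U, hU, hUS⟩ := h.exists_forall_eq_zero hcodim hm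
      have hdim : c m = finrank ℂ (Z × ℂ) := by simpa using heq.symm
      exact hasSmoothing_of_eq h.isClosed (h.hasC1Codim_nonTransverseJets hdim) hF hU hUS

end IsStratification

section Rank

variable {K κ κ' : Type*} [Field K] [Fintype κ]

theorem rank_eq_zero_iff {N : Matrix κ' κ K} : N.rank = 0 ↔ N = 0 := by
  classical
  rw [Matrix.rank, Submodule.finrank_eq_zero, LinearMap.range_eq_bot]
  exact (Matrix.toLin' : Matrix κ' κ K ≃ₗ[K] _).map_eq_zero_iff

variable [Fintype κ']

theorem rank_fromBlocks_zero_zero (A : Matrix κ κ K) (D : Matrix κ' κ' K) :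
    (Matrix.fromBlocks A 0 0 D).rank = A.rank + D.rank := by
  let e := LinearEquiv.sumArrowLequivProdArrow κ κ' K K
  have he : (Matrix.fromBlocks A 0 0 D).mulVecLin =
      e.symm.toLinearMap ∘ₗ A.mulVecLin.prodMap D.mulVecLin ∘ₗ e.toLinearMap := by
    refine LinearMap.ext fun x => ?_
    rw [Matrix.mulVecLin_apply, Matrix.fromBlocks_mulVec, Matrix.zero_mulVec, Matrix.zero_mulVec,
      add_zero, zero_add]
    rfl
  have hprod : finrank K ((LinearMap.range A.mulVecLin).prod (LinearMap.range D.mulVecLin)) =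
      A.rank + D.rank := by
    rw [← Submodule.range_subtype (LinearMap.range A.mulVecLin),
      ← Submodule.range_subtype (LinearMap.range D.mulVecLin), ← LinearMap.range_prodMap,
      LinearMap.finrank_range_of_inj
        (Prod.map_injective.2 ⟨Subtype.val_injective, Subtype.val_injective⟩), Module.finrank_prod]
    rfl
  rw [Matrix.rank, he, LinearMap.range_comp, LinearMap.range_comp_of_range_eq_top _ e.range,
    LinearEquiv.finrank_map_eq, LinearMap.range_prodMap, hprod]

variable [DecidableEq κ]

/-- The Schur complement of the top left block of `M`, multiplied by the determinant of that block
so as to be polynomial in the entries of `M`. -/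
def schurComplement {R : Type*} [CommRing R] (M : Matrix (κ ⊕ κ') (κ ⊕ κ') R) : Matrix κ' κ' R :=
  M.toBlocks₁₁.det • M.toBlocks₂₂ - M.toBlocks₂₁ * M.toBlocks₁₁.adjugate * M.toBlocks₁₂

theorem rank_eq_card_add_rank_schurComplement {M : Matrix (κ ⊕ κ') (κ ⊕ κ') K}
    (hM : M.toBlocks₁₁.det ≠ 0) : M.rank = Fintype.card κ + (schurComplement M).rank := by
  classical
  have hunit := hM.isUnit
  have := Matrix.invertibleOfIsUnitDet _ hunit
  have hschur : schurComplement M = M.toBlocks₁₁.det •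
      (M.toBlocks₂₂ - M.toBlocks₂₁ * ⅟M.toBlocks₁₁ * M.toBlocks₁₂) := by
    rw [schurComplement, smul_sub, Matrix.invOf_eq_nonsing_inv, Matrix.inv_def,
      Matrix.mul_smul, Matrix.smul_mul, smul_smul, Ring.mul_inverse_cancel _ hunit, one_smul]
  nth_rw 1 [← M.fromBlocks_toBlocks, Matrix.fromBlocks_eq_of_invertible₁₁,
    Matrix.rank_mul_eq_left_of_det_ne_zero _ _ (by simp),
    Matrix.rank_mul_eq_right_of_det_ne_zero _ _ (by simp), rank_fromBlocks_zero_zero,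
    Matrix.rank_of_det_ne_zero hM]
  rw [hschur, Matrix.rank_smul_of_mem_nonZeroDivisors _ (mem_nonZeroDivisors_of_ne_zero hM)]

end Rank

section Principal

variable {K ι κ : Type*} [Field K] [Fintype κ]

theorem exists_eq_mul_submatrix_mul_transpose {M : Matrix ι ι K} (hM : M.IsSymm) {a : κ → ι}
    (ha : Submodule.span K (Set.range (M.row ∘ a)) = Submodule.span K (Set.range M.row)) :
    ∃ P : Matrix ι κ K, M = P * M.submatrix a a * P.transpose := by
  have hrow (i : ι) : ∃ p : κ → K, ∑ k, p k • M.row (a k) = M.row i := by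
    exact (Submodule.mem_span_range_iff_exists_fun K).1 (ha ▸ Submodule.subset_span ⟨i, rfl⟩)
  choose P hP using hrow
  have hrows : M = Matrix.of P * M.submatrix a id := by
    ext i j
    simpa [Matrix.mul_apply] using (congrFun (hP i) j).symm
  have hcols : M.submatrix a id = M.submatrix a a * (Matrix.of P).transpose := calc
    M.submatrix a id = (M.submatrix id a).transpose := by rw [Matrix.transpose_submatrix, hM.eq]
    _ = ((Matrix.of P * M.submatrix a id).submatrix id a).transpose := by rw [← hrows]
    _ = (Matrix.of P * M.submatrix a a).transpose := rfl
    _ = _ := by rw [Matrix.transpose_mul, Matrix.transpose_submatrix, hM.eq]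
  exact ⟨.of P, by rw [Matrix.mul_assoc, ← hcols, ← hrows]⟩

variable [Fintype ι]

theorem det_submatrix_ne_zero {M : Matrix ι ι K} (hM : M.IsSymm) [DecidableEq κ] {a : κ → ι}
    (ha : Submodule.span K (Set.range (M.row ∘ a)) = Submodule.span K (Set.range M.row))
    (hcard : Fintype.card κ = M.rank) : (M.submatrix a a).det ≠ 0 := by
  obtain ⟨P, hP⟩ := exists_eq_mul_submatrix_mul_transpose hM ha
  have hrank : M.rank ≤ (M.submatrix a a).rank := by
    nth_rw 1 [hP]
    exact (Matrix.rank_mul_le_left _ _).trans (Matrix.rank_mul_le_right _ _)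
  rw [← hcard, Matrix.rank_eq_finrank_span_row] at hrank
  have hli : LinearIndependent K (M.submatrix a a).row :=
    linearIndependent_iff_card_le_finrank_span.2 hrank
  have hunit : IsUnit (M.submatrix a a) := Matrix.linearIndependent_rows_iff_isUnit.1 hli
  exact ((Matrix.isUnit_iff_isUnit_det _).1 hunit).ne_zero

theorem exists_embedding_span_row_eq (M : Matrix ι ι K) :
    ∃ a : Fin M.rank ↪ ι,
      Submodule.span K (Set.range (M.row ∘ a)) = Submodule.span K (Set.range M.row) := by
  obtain ⟨κ, a, ha, hspan, hli⟩ := exists_linearIndependent' K M.row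
  have := Finite.of_injective a ha
  cases nonempty_fintype κ
  have hcard : Fintype.card κ = M.rank := by
    rw [← finrank_span_eq_card hli, hspan, ← Matrix.rank_eq_finrank_span_row]
  let f := (Fintype.equivFinOfCardEq hcard).symm
  refine ⟨⟨a ∘ f, ha.comp f.injective⟩, ?_⟩
  rw [← hspan]
  exact congrArg _ (f.surjective.range_comp (M.row ∘ a))

theorem exists_equiv_comp_inl_eq {r : ℕ} (a : Fin r ↪ ι) :
    ∃ e : Fin r ⊕ Fin (Fintype.card ι - r) ≃ ι, e ∘ Sum.inl = a := by
  classical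
  have hcard : Fintype.card ((Set.range a)ᶜ : Set ι) = Fintype.card ι - r := by
    rw [Fintype.card_compl_set, Set.card_range_of_injective a.injective, Fintype.card_fin]
  refine ⟨((Equiv.ofInjective a a.injective).sumCongr
    (Fintype.equivFinOfCardEq hcard).symm).trans (Equiv.Set.sumCompl _), ?_⟩
  ext i
  simp

theorem exists_equiv_det_toBlocks₁₁_ne_zero {M : Matrix ι ι K} (hM : M.IsSymm) :
    ∃ e : Fin M.rank ⊕ Fin (Fintype.card ι - M.rank) ≃ ι,
      (M.submatrix e e).toBlocks₁₁.det ≠ 0 := by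
  obtain ⟨a, ha⟩ := exists_embedding_span_row_eq M
  obtain ⟨e, he⟩ := exists_equiv_comp_inl_eq a
  refine ⟨e, ?_⟩
  have hblock : (M.submatrix e e).toBlocks₁₁ = M.submatrix a a := by
    rw [← he]
    rfl
  rw [hblock]
  exact det_submatrix_ne_zero hM ha (Fintype.card_fin _)

end Principal

section SymmetricMatrices

variable {ι κ κ' : Type*}

/-- The symmetric matrix with entries `v s(i, j)`; functions on `Sym2 ι` thus serve as coordinates
on the space of symmetric `ι × ι` matrices. -/
def symMatrix {α : Type*} (v : Sym2 ι → α) : Matrix ι ι α := .of fun i j => v s(i, j)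

theorem isSymm_symMatrix {α : Type*} (v : Sym2 ι → α) : (symMatrix v).IsSymm :=
  Matrix.IsSymm.ext fun _ _ => congrArg v Sym2.eq_swap

/-- The coordinates of a symmetric matrix, inverse to `symMatrix`. -/
def symCoord {α : Type*} (A : Matrix ι ι α) (hA : A.IsSymm) : Sym2 ι → α :=
  Sym2.lift ⟨A, fun i j => hA.apply j i⟩

theorem symMatrix_symCoord {α : Type*} {A : Matrix ι ι α} (hA : A.IsSymm) :
    symMatrix (symCoord A hA) = A := rfl

theorem symMatrix_injective {α : Type*} : Function.Injective (symMatrix : (Sym2 ι → α) → _) := by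
  intro v w h
  ext s
  induction s with
  | _ i j => exact congrFun (congrFun h i) j

theorem symMatrix_zero {α : Type*} [Zero α] : symMatrix (0 : Sym2 ι → α) = 0 := rfl

theorem symMatrix_add {α : Type*} [Add α] (v w : Sym2 ι → α) :
    symMatrix (v + w) = symMatrix v + symMatrix w := rfl

theorem symMatrix_smul {R α : Type*} [SMul R α] (a : R) (v : Sym2 ι → α) :
    symMatrix (a • v) = a • symMatrix v := rfl

theorem exists_isSymm_rank_eq {K : Type*} [Field K] [Fintype κ] {m : ℕ} (hm : m ≤ Fintype.card κ) :
    ∃ N : Matrix κ κ K, N.IsSymm ∧ N.rank = m := by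
  classical
  obtain ⟨T, -, hT⟩ := Finset.exists_subset_card_eq (s := (Finset.univ : Finset κ)) hm
  refine ⟨.diagonal fun j => if j ∈ T then 1 else 0, Matrix.isSymm_diagonal _, ?_⟩
  rw [Matrix.rank_diagonal]
  simpa using hT

theorem isSymm_schurComplement {R : Type*} [CommRing R] [Fintype κ] [DecidableEq κ]
    {M : Matrix (κ ⊕ κ') (κ ⊕ κ') R} (hM : M.IsSymm) : (schurComplement M).IsSymm := by
  have h₁₁ : M.toBlocks₁₁.IsSymm := congrArg Matrix.toBlocks₁₁ hM
  have h₂₂ : M.toBlocks₂₂.IsSymm := congrArg Matrix.toBlocks₂₂ hM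
  have h₁₂ : M.toBlocks₂₁.transpose = M.toBlocks₁₂ := congrArg Matrix.toBlocks₁₂ hM
  have h₂₁ : M.toBlocks₁₂.transpose = M.toBlocks₂₁ := congrArg Matrix.toBlocks₂₁ hM
  rw [Matrix.IsSymm, schurComplement, Matrix.transpose_sub, Matrix.transpose_smul, h₂₂,
    Matrix.transpose_mul, Matrix.transpose_mul, h₁₂, h₂₁, Matrix.adjugate_transpose, h₁₁,
    Matrix.mul_assoc]

theorem lowerSemicontinuous_rank_symMatrix [Fintype ι] :
    LowerSemicontinuous fun v : Sym2 ι → ℂ => (symMatrix v).rank := by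
  classical
  let T : (Sym2 ι → ℂ) →ₗ[ℂ] (ι → ℂ) →L[ℂ] (ι → ℂ) :=
    (Matrix.toLin' ≪≫ₗ LinearMap.toContinuousLinearMap).toLinearMap ∘ₗ
      { toFun := symMatrix, map_add' := symMatrix_add, map_smul' := symMatrix_smul }
  refine lowerSemicontinuous_iff_isOpen_preimage.2 fun r => ?_
  have hopen := (isOpen_setOfPred_nat_le_rank (𝕜 := ℂ) (E := ι → ℂ) (F := ι → ℂ) (r + 1)).preimage
    T.continuous_of_finiteDimensional
  convert hopen using 1
  ext v
  have hrank : (T v : (ι → ℂ) →ₗ[ℂ] (ι → ℂ)).rank = (symMatrix v).rank :=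
    (Module.finrank_eq_rank ..).symm
  simp only [Set.mem_preimage, Set.mem_Ioi, Set.mem_ofPred_eq, hrank]
  norm_cast

theorem contDiff_det {𝕜 E : Type*} [NontriviallyNormedField 𝕜] [NormedAddCommGroup E]
    [NormedSpace 𝕜 E] [Fintype κ] [DecidableEq κ] {n : WithTop ℕ∞} {A : E → Matrix κ κ 𝕜}
    (hA : ∀ i j, ContDiff 𝕜 n fun x => A x i j) : ContDiff 𝕜 n fun x => (A x).det := by
  simp only [Matrix.det_apply]
  exact ContDiff.sum fun σ _ => (contDiff_prod fun i _ => hA _ _).const_smul _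

theorem contDiff_schurComplement {𝕜 E : Type*} [NontriviallyNormedField 𝕜] [NormedAddCommGroup E]
    [NormedSpace 𝕜 E] [Fintype κ] [DecidableEq κ] {n : WithTop ℕ∞}
    {M : E → Matrix (κ ⊕ κ') (κ ⊕ κ') 𝕜} (hM : ∀ i j, ContDiff 𝕜 n fun x => M x i j) (i j : κ') :
    ContDiff 𝕜 n fun x => schurComplement (M x) i j := by
  have hadj (k l : κ) : ContDiff 𝕜 n fun x => (M x).toBlocks₁₁.adjugate k l := by
    simp only [Matrix.adjugate_apply]
    refine contDiff_det fun a b => ?_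
    by_cases ha : a = l
    · simp [ha, contDiff_const]
    · simp only [Matrix.updateRow_ne ha]
      exact hM _ _
  simp only [schurComplement, Matrix.sub_apply, Matrix.smul_apply, Matrix.mul_apply]
  refine ((contDiff_det fun k l => hM _ _).smul (hM _ _)).sub ?_
  exact ContDiff.sum fun k _ => (ContDiff.sum fun l _ => (hM _ _).mul (hadj _ _)).mul (hM _ _)

theorem schurComplement_add_fromBlocks {R : Type*} [CommRing R] [Fintype κ] [DecidableEq κ]
    (M : Matrix (κ ⊕ κ') (κ ⊕ κ') R) (N : Matrix κ' κ' R) :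
    schurComplement (M + .fromBlocks 0 0 0 N) = schurComplement M + M.toBlocks₁₁.det • N := by
  obtain ⟨A, B, C, D, rfl⟩ : ∃ A B C D, M = .fromBlocks A B C D :=
    ⟨_, _, _, _, M.fromBlocks_toBlocks.symm⟩
  simp only [schurComplement, Matrix.fromBlocks_add, Matrix.toBlocks_fromBlocks₁₁,
    Matrix.toBlocks_fromBlocks₁₂, Matrix.toBlocks_fromBlocks₂₁, Matrix.toBlocks_fromBlocks₂₂,
    add_zero, smul_add]
  abel

theorem exists_forall_schurComplement_add_smul {R : Type*} [CommRing R] [Fintype κ] [DecidableEq κ]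
    (e : κ ⊕ κ' ≃ ι) (v : Sym2 ι → R) {N : Matrix κ' κ' R} (hN : N.IsSymm) :
    ∃ d : Sym2 ι → R, ∀ s : R,
      ((symMatrix (v + s • d)).submatrix e e).toBlocks₁₁ =
        ((symMatrix v).submatrix e e).toBlocks₁₁ ∧
      schurComplement ((symMatrix (v + s • d)).submatrix e e) =
        schurComplement ((symMatrix v).submatrix e e) +
          ((symMatrix v).submatrix e e).toBlocks₁₁.det • s • N := by
  let d := symCoord ((Matrix.fromBlocks 0 0 0 N).submatrix e.symm e.symm)
    ((Matrix.IsSymm.fromBlocks (Matrix.transpose_zero) (Matrix.transpose_zero) hN).submatrix _)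
  have hline (s : R) : (symMatrix (v + s • d)).submatrix e e =
      (symMatrix v).submatrix e e + .fromBlocks 0 0 0 (s • N) := by
    have hd : (symMatrix d).submatrix e e = .fromBlocks 0 0 0 N := by
      simp [d, symMatrix_symCoord]
    rw [symMatrix_add, symMatrix_smul, Matrix.submatrix_add, Pi.add_apply, Pi.add_apply,
      Matrix.submatrix_smul, Pi.smul_apply, Pi.smul_apply, hd, Matrix.fromBlocks_smul]
    simp only [smul_zero]
  refine ⟨d, fun s => ?_⟩
  rw [hline, schurComplement_add_fromBlocks]
  refine ⟨?_, rfl⟩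
  ext i j
  simp [Matrix.toBlocks₁₁]

theorem isSubmanifoldOfCodim_of_submersion {E Q : Type*} [NormedAddCommGroup E] [NormedSpace ℂ E]
    [NormedAddCommGroup Q] [NormedSpace ℂ Q] [FiniteDimensional ℂ Q] {S : Set E} {c : ℕ}
    (hc : finrank ℂ Q = c)
    (h : ∀ x ∈ S, ∃ U : Set E, IsOpen U ∧ x ∈ U ∧ ∃ g : E → Q, ContDiff ℂ ⊤ g ∧
      (∀ y ∈ U, y ∈ S ↔ g y = 0) ∧ Function.Surjective (fderiv ℂ g x)) :
    IsSubmanifoldOfCodim E S c := by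
  let L : Q ≃L[ℂ] EuclideanSpace ℂ (Fin c) := .ofFinrankEq (by simp [hc])
  intro x hx
  obtain ⟨U, hU, hxU, g, hg, hgU, hsurj⟩ := h x hx
  refine ⟨U, hU, hxU, L ∘ g, (L.contDiff.comp hg).contDiffOn, fun y hy => ?_, ?_⟩
  · simp [hgU y hy]
  · rw [L.comp_fderiv]
    exact L.surjective.comp hsurj

section RankStrata

variable [Fintype ι]

theorem rank_symMatrix_eq_add {K : Type*} [Field K] {r : ℕ} {v : Sym2 ι → K}
    (e : Fin r ⊕ Fin (Fintype.card ι - r) ≃ ι)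
    (hv : ((symMatrix v).submatrix e e).toBlocks₁₁.det ≠ 0) :
    (symMatrix v).rank = r + (schurComplement ((symMatrix v).submatrix e e)).rank := by
  rw [← Matrix.rank_submatrix _ e e, rank_eq_card_add_rank_schurComplement hv, Fintype.card_fin]

theorem isSubmanifoldOfCodim_rank_symMatrix (i : ℕ) :
    IsSubmanifoldOfCodim (Sym2 ι → ℂ) {v | (symMatrix v).rank = i}
      ((Fintype.card ι - i + 1).choose 2) := by
  refine isSubmanifoldOfCodim_of_submersion (Q := Sym2 (Fin (Fintype.card ι - i)) → ℂ)
    (by simp [Sym2.card]) ?_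
  rintro v rfl
  obtain ⟨e, he⟩ := exists_equiv_det_toBlocks₁₁_ne_zero (isSymm_symMatrix v)
  let M (w : Sym2 ι → ℂ) := (symMatrix w).submatrix e e
  let g (w : Sym2 ι → ℂ) : Sym2 (Fin (Fintype.card ι - (symMatrix v).rank)) → ℂ :=
    symCoord (schurComplement (M w)) (isSymm_schurComplement ((isSymm_symMatrix w).submatrix e))
  have hM (i j) : ContDiff ℂ ⊤ fun w => M w i j := contDiff_apply ℂ ℂ s(e i, e j)
  have hg : ContDiff ℂ ⊤ g := contDiff_pi.2 fun s => by
    induction s with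
    | _ i j => exact contDiff_schurComplement hM i j
  have hgM (w) : symMatrix (g w) = schurComplement (M w) := symMatrix_symCoord _
  refine ⟨{w | (M w).toBlocks₁₁.det ≠ 0}, ?_, he, g, hg, fun w hw => ?_, ?_⟩
  · exact isOpen_ne.preimage (contDiff_det fun i j => hM _ _).continuous
  · rw [← symMatrix_injective.eq_iff, hgM, symMatrix_zero, ← rank_eq_zero_iff, Set.mem_ofPred_eq,
      rank_symMatrix_eq_add e hw, Nat.add_eq_left]
  · refine surjective_fderiv_of_line (hg.differentiable (by simp) v) fun w => ?_
    obtain ⟨d, hd⟩ := exists_forall_schurComplement_add_smul e v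
      (isSymm_symMatrix ((M v).toBlocks₁₁.det⁻¹ • w))
    refine ⟨d, fun s => symMatrix_injective ?_⟩
    calc symMatrix (g (v + s • d))
        = schurComplement (M v) +
            (M v).toBlocks₁₁.det • s • symMatrix ((M v).toBlocks₁₁.det⁻¹ • w) := (hd s).2
      _ = symMatrix (g v) + s • symMatrix w := by
        rw [symMatrix_smul, smul_comm, smul_inv_smul₀ he, hgM]
      _ = symMatrix (g v + s • w) := by rw [symMatrix_add, symMatrix_smul]

theorem mem_closure_rank_symMatrix_eq {v : Sym2 ι → ℂ} {m : ℕ} (hv : (symMatrix v).rank ≤ m)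
    (hm : m ≤ Fintype.card ι) : v ∈ closure {w | (symMatrix w).rank = m} := by
  obtain ⟨e, he⟩ := exists_equiv_det_toBlocks₁₁_ne_zero (isSymm_symMatrix v)
  have hschur : schurComplement ((symMatrix v).submatrix e e) = 0 := by
    rw [← rank_eq_zero_iff, ← Nat.add_eq_left, ← rank_symMatrix_eq_add e he]
  obtain ⟨N, hNsymm, hN⟩ := exists_isSymm_rank_eq (K := ℂ)
    (κ := Fin (Fintype.card ι - (symMatrix v).rank)) (m := m - (symMatrix v).rank) (by simp; lia)
  obtain ⟨d, hd⟩ := exists_forall_schurComplement_add_smul e v hNsymm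
  have hlim : Tendsto (fun s : ℂ => v + s • d) (𝓝[≠] 0) (𝓝 v) :=
    tendsto_nhdsWithin_of_tendsto_nhds (Continuous.tendsto' (by fun_prop) _ _ (by simp))
  refine mem_closure_of_tendsto hlim ?_
  filter_upwards [self_mem_nhdsWithin] with s hs
  have hdet := (hd s).1 ▸ he
  rw [rank_symMatrix_eq_add e hdet, (hd s).2, hschur, zero_add,
    Matrix.rank_smul_of_mem_nonZeroDivisors _ (mem_nonZeroDivisors_of_ne_zero he),
    Matrix.rank_smul_of_mem_nonZeroDivisors _ (mem_nonZeroDivisors_of_ne_zero hs), hN,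
    Nat.add_sub_cancel' hv]

theorem isStratification_rank_symMatrix {m : ℕ} (hm : m ≤ Fintype.card ι) :
    IsStratification (fun v : Sym2 ι → ℂ => (symMatrix v).rank)
      (fun i => (Fintype.card ι - i + 1).choose 2) m where
  lowerSemicontinuous := lowerSemicontinuous_rank_symMatrix
  isSubmanifoldOfCodim i _ := isSubmanifoldOfCodim_rank_symMatrix i
  codim_lt i hi := by
    have hle : (Fintype.card ι - m + 1).choose 2 ≤ (Fintype.card ι - i).choose 2 :=
      Nat.choose_le_choose 2 (by lia)
    have hsucc : (Fintype.card ι - i + 1).choose 2 =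
        (Fintype.card ι - i) + (Fintype.card ι - i).choose 2 := by
      rw [Nat.choose_succ_succ', Nat.choose_one_right]
    lia

end RankStrata

end SymmetricMatrices

section SymmetricDeformations

variable {ι Z : Type*} [Fintype ι] [NormedAddCommGroup Z] [NormedSpace ℂ Z]
  {F : Z → Matrix ι ι ℂ}

theorem contDiff_symCoord (hF : ∀ i j, ContDiff ℂ ⊤ fun z => F z i j) (hsymm : ∀ z, (F z).IsSymm) :
    ContDiff ℂ ⊤ fun z => symCoord (F z) (hsymm z) :=
  contDiff_pi.2 fun s => by
    induction s with
    | _ i j => exact hF i j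

theorem exists_symmetric_smoothing_iff_hasSmoothing (hsymm : ∀ z, (F z).IsSymm) (m : ℕ) :
    (∃ Ft : Z × ℂ → Matrix ι ι ℂ, (∀ i j, ContDiff ℂ ⊤ fun p => Ft p i j) ∧
        (∀ p, (Ft p).IsSymm) ∧ (∀ z, Ft (z, 0) = F z) ∧
        ∃ W ∈ 𝓝 (0 : Z), ∀ᶠ y in 𝓝[≠] (0 : ℂ), ∀ z ∈ W, ¬ (Ft (z, y)).rank ≤ m) ↔
      HasSmoothing {v | (symMatrix v).rank ≤ m} fun z => symCoord (F z) (hsymm z) := by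
  constructor
  · rintro ⟨Ft, hFt, hFtsymm, hFt0, hsmooth⟩
    exact ⟨fun p => symCoord (Ft p) (hFtsymm p), contDiff_symCoord hFt hFtsymm,
      fun z => symMatrix_injective (hFt0 z), hsmooth⟩
  · rintro ⟨Ft, hFt, hFt0, hsmooth⟩
    exact ⟨fun p => symMatrix (Ft p), fun i j => contDiff_pi.1 hFt s(i, j),
      fun p => isSymm_symMatrix _, fun z => congrArg symMatrix (hFt0 z), hsmooth⟩

end SymmetricDeformations

end Smoothing

open Smoothing in
theorem has_smoothing_iff_dimension_bound_general {ι Z : Type*} [Fintype ι] [NormedAddCommGroup Z]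
    [NormedSpace ℂ Z] [FiniteDimensional ℂ Z] {r : ℕ} (hrn : r ≤ Fintype.card ι)
    {F : Z → Matrix ι ι ℂ} (hol : ∀ i j, ContDiff ℂ ⊤ fun z => F z i j)
    (hsymm : ∀ z, (F z).IsSymm) (hF0 : (F 0).rank < r)
    (hcodim : ∀ i < r, ∃ U ∈ 𝓝 (0 : Z), IsSubmanifoldOfCodim Z
      {z | z ∈ U \ {0} ∧ (F z).rank = i}
      ((Fintype.card ι - i) * (Fintype.card ι - i + 1) / 2)) :
    (∃ Ft : Z × ℂ → Matrix ι ι ℂ, (∀ i j, ContDiff ℂ ⊤ fun p => Ft p i j) ∧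
        (∀ p, (Ft p).IsSymm) ∧ (∀ z, Ft (z, 0) = F z) ∧
        ∃ W ∈ 𝓝 (0 : Z), ∀ᶠ y in 𝓝[≠] (0 : ℂ), ∀ z ∈ W, ¬ (Ft (z, y)).rank ≤ r - 1) ↔
      Module.finrank ℂ Z < (Fintype.card ι - r + 1) * (Fintype.card ι - r + 2) / 2 := by
  obtain ⟨m, rfl⟩ : ∃ m, r = m + 1 := ⟨r - 1, by lia⟩
  have hchoose (k : ℕ) : k * (k + 1) / 2 = (k + 1).choose 2 := by
    rw [Nat.choose_two_right, Nat.add_sub_cancel, mul_comm]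
  simp only [hchoose] at hcodim
  have hstrat := isStratification_rank_symMatrix (ι := ι) (m := m) (by lia)
  rw [exists_symmetric_smoothing_iff_hasSmoothing hsymm, hchoose, Nat.add_sub_cancel,
    hstrat.hasSmoothing_iff (contDiff_symCoord hol hsymm)
      (mem_closure_rank_symMatrix_eq (Nat.le_of_lt_succ hF0) (by lia))
      fun i hi => hcodim i (Nat.lt_succ_of_le hi),
    show Fintype.card ι - (m + 1) + 1 = Fintype.card ι - m by lia]

/-- With the expected-codimension hypothesis (each rank stratum of the SEIDS
`X = F⁻¹(S_r)` has the expected codimension `(n-i)(n-i+1)/2` off the origin), the germ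
`(X,0)` admits a smoothing — a holomorphic symmetric deformation `F̃` of `F` whose
fibers over generic nearby parameters `y ≠ 0` avoid `S_{r-1}`, i.e. the perturbed
fiber maps have empty preimage of `S_{r-1}` near the origin — if and only if
`q < (n-r+1)(n-r+2)/2`. -/
theorem has_smoothing_iff_dimension_bound
    (q n r : ℕ) (hr1 : 1 ≤ r) (hrn : r ≤ n)
    (F : EuclideanSpace ℂ (Fin q) → Matrix (Fin n) (Fin n) ℂ)
    (hol : ∀ i j, ContDiff ℂ ⊤ fun z => F z i j)
    (hsymm : ∀ z, (F z).IsSymm) (hF0 : F 0 = 0)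
    (hcodim : ∀ i ≤ n, ∃ U ∈ 𝓝 (0 : EuclideanSpace ℂ (Fin q)),
      IsSubmanifoldOfCodim (EuclideanSpace ℂ (Fin q))
        {z | z ∈ U \ {0} ∧ (F z).rank = i} ((n - i) * (n - i + 1) / 2)) :
    (∃ Ft : EuclideanSpace ℂ (Fin q) × ℂ → Matrix (Fin n) (Fin n) ℂ,
        (∀ i j, ContDiff ℂ ⊤ fun p => Ft p i j) ∧
        (∀ p, (Ft p).IsSymm) ∧
        (∀ z, Ft (z, 0) = F z) ∧
        ∃ W ∈ 𝓝 (0 : EuclideanSpace ℂ (Fin q)),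
          ∀ᶠ y in 𝓝[≠] (0 : ℂ), ∀ z ∈ W, ¬ (Ft (z, y)).rank ≤ r - 1) ↔
      q < (n - r + 1) * (n - r + 2) / 2 := by
  have hrank : (F 0).rank < r := by rwa [hF0, Matrix.rank_zero]
  simpa using has_smoothing_iff_dimension_bound_general (by simpa using hrn) hol hsymm hrank
    (by simpa using fun i (hi : i < r) => hcodim i (hi.le.trans hrn))
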